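/- arXiv:1706.02951 — 2 statements merged into one kernel-verified Lean document; each statement's English description precedes it below -/
import Mathlib

section
/- Let X be a complex Banach space, let 𝒩 be a non-trivial nest on X, and let n ≥ 2. A linear map L : Alg 𝒩 → B(X) is a Lie n-derivation if and only if there exist a derivation D : Alg 𝒩 → B(X) and a linear map H : Alg 𝒩 → ℂI vanishing on every (n−1)-th commutator p_n(A_1,…,A_n) with A_1,…,A_n ∈ Alg 𝒩 such that L = D + H. Moreover, if L is continuous then D and H can be chosen continuous. -/
open scoped Classical

set_option synthInstance.maxHeartbeats 1000000
set_option maxHeartbeats 1000000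

noncomputable section

/-- The `(n-1)`-th commutator polynomial `p_n(x_1, …, x_n)`, defined recursively by
`p_1(x_1) = x_1` and `p_k(x_1, …, x_k) = [p_{k-1}(x_1, …, x_{k-1}), x_k]`. -/
def commPoly {A : Type*} [NonUnitalNonAssocRing A] : (n : ℕ) → (Fin n → A) → A
  | 0, _ => 0
  | 1, a => a 0
  | n + 2, a =>
      commPoly (n + 1) (fun i => a i.castSucc) * a (Fin.last (n + 1)) -
        a (Fin.last (n + 1)) * commPoly (n + 1) (fun i => a i.castSucc)

/-- A nest of closed subspaces of `X`: it contains `{0}` and `X`, is totally ordered by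
inclusion, is closed under arbitrary intersections, and contains the norm-closed linear
span of the union of any subfamily. -/
structure IsNest {X : Type*} [NormedAddCommGroup X] [NormedSpace ℂ X]
    (𝒩 : Set (Submodule ℂ X)) : Prop where
  closed : ∀ N ∈ 𝒩, IsClosed (N : Set X)
  bot_mem : (⊥ : Submodule ℂ X) ∈ 𝒩
  top_mem : (⊤ : Submodule ℂ X) ∈ 𝒩
  total : ∀ N₁ ∈ 𝒩, ∀ N₂ ∈ 𝒩, N₁ ≤ N₂ ∨ N₂ ≤ N₁
  sInf_mem : ∀ S ⊆ 𝒩, sInf S ∈ 𝒩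
  closure_sSup_mem : ∀ S ⊆ 𝒩, (sSup S).topologicalClosure ∈ 𝒩

/-- The nest algebra `Alg 𝒩` of all bounded operators leaving every member of `𝒩`
invariant. -/
def nestAlgebra {X : Type*} [NormedAddCommGroup X] [NormedSpace ℂ X]
    (𝒩 : Set (Submodule ℂ X)) : Subalgebra ℂ (X →L[ℂ] X) where
  carrier := {T : X →L[ℂ] X | ∀ N ∈ 𝒩, ∀ x ∈ N, T x ∈ N}
  mul_mem' := fun {a b} ha hb N hN x hx => ha N hN _ (hb N hN x hx)
  one_mem' := fun N _ x hx => hx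
  add_mem' := fun {a b} ha hb N hN x hx => N.add_mem (ha N hN x hx) (hb N hN x hx)
  zero_mem' := fun N _ _ _ => N.zero_mem
  algebraMap_mem' := fun r N hN x hx => by
    simpa [Algebra.algebraMap_eq_smul_one] using N.smul_mem r hx

/-- `L` is a Lie `n`-derivation on the subalgebra `𝒜` of `B`:
`L(p_n(a_1,…,a_n)) = ∑_k p_n(a_1, …, a_{k-1}, L(a_k), a_{k+1}, …, a_n)`. -/
def IsLieNDeriv {B : Type*} [Ring B] [Algebra ℂ B] (𝒜 : Subalgebra ℂ B)
    (n : ℕ) (L : ↥𝒜 →ₗ[ℂ] B) : Prop :=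
  ∀ a : Fin n → ↥𝒜,
    L (commPoly n a) =
      ∑ k : Fin n, commPoly n (Function.update (fun i => ((a i : B))) k (L (a k)))

/-- `D` is an (associative) derivation on the subalgebra `𝒜` of `B`. -/
def IsDerivOn {B : Type*} [Ring B] [Algebra ℂ B] (𝒜 : Subalgebra ℂ B)
    (D : ↥𝒜 →ₗ[ℂ] B) : Prop :=
  ∀ a b : ↥𝒜, D (a * b) = D a * (b : B) + (a : B) * D b

/-!
Put `G(A, B) = L [A, B] - [L A, B] - [A, L B]`. The Lie `n`-identity extends to iterated commutators
of length `k (n - 1)` for every `k`. By Wielandt's theorem a commutator that is scalar vanishes, so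
an operator all of whose sufficiently long iterated commutators with `Alg 𝒩` vanish is scalar. It
follows that `G(A, B)` is scalar when `[A, B] = 0`, and that `[G(A, B), C] = 0` when
`[[A, B], C] = 0`.

For square-zero operators `x ⊗ f` this gives `G(z ⊗ f, x ⊗ g) = g(z) x ⊗ s` modulo scalars, with `s`
depending only on `f`. A chain of `n - 1` commutators starting and ending at operators of the form
`x ⊗ f` accumulates the defect `-(n - 1) x ⊗ s`, so `s = 0`. A chain of `n - 2` commutators followed
by one with `A` then gives `G(x ⊗ f, A) = 0` for all `A` in `Alg 𝒩`.

Fix `f₀` annihilating a nonzero member of the nest and `v₀` with `f₀(v₀) = 1`, and let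
`T x = L(x ⊗ f₀) v₀`. On the operators `x ⊗ f` the map `L` is `[T, ·]` plus a map `x ⊗ f ↦ x ⊗ s_f`,
whence `(L A - [T, A]) x = φ(A) x` for `x` in some nonzero member of the nest, and
`f ∘ (D(AB) - D(A) B - A D(B)) = 0` for `D = L - φ I`. If the intersection `0₊` of the nonzero
members is `0`, the functionals `f` annihilating some nonzero member separate the points of `X`, and
`D` is a derivation. If `0₊ ≠ 0`, the Lie defect of `D` vanishes on `0₊`, hence vanishes whenever it
is scalar; this makes `x ⊗ g` with `x ∈ 0₊` usable for every functional `g`. Evaluating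
`(L A - [T, A]) x₀` at a functional gives a formula for `φ` showing that it is continuous when `L`
is.
-/

section LinearAlgebra

variable {k V W M : Type*} [Field k] [AddCommGroup V] [Module k V] [AddCommGroup W] [Module k W]
  [AddCommGroup M] [Module k M]

lemma exists_eq_smul_of_forall_apply_eq_zero (p : V →ₗ[k] W →ₗ[k] k) (T : V →ₗ[k] W →ₗ[k] M)
    (h : ∀ v w, p v w = 0 → T v w = 0) : ∃ b, ∀ v w, T v w = p v w • b := by
  by_cases hp : ∀ v w, p v w = 0
  · exact ⟨0, fun v w => by rw [h v w (hp v w), smul_zero]⟩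
  push Not at hp
  obtain ⟨v₀, w₀, hvw⟩ := hp
  have fst : ∀ v, T v w₀ = (p v w₀ / p v₀ w₀) • T v₀ w₀ := fun v => by
    simpa [sub_eq_zero, hvw] using h (v - (p v w₀ / p v₀ w₀) • v₀) w₀ (by simp [hvw])
  have snd : ∀ v w, p v w₀ ≠ 0 → T v w = p v w • (p v₀ w₀)⁻¹ • T v₀ w₀ := fun v w hv => by
    have := h v (w - (p v w / p v w₀) • w₀) (by simp [hv])
    rw [map_sub, map_smul, sub_eq_zero, fst, smul_smul] at this
    rw [this, smul_smul]
    congr 1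
    field_simp
  refine ⟨(p v₀ w₀)⁻¹ • T v₀ w₀, fun v w => ?_⟩
  by_cases hv : p v w₀ = 0
  · have := snd (v + v₀) w (by simpa [hv] using hvw)
    rwa [map_add, map_add, LinearMap.add_apply, LinearMap.add_apply, add_smul, snd v₀ w hvw,
      add_left_inj] at this
  · exact snd v w hv

lemma exists_eq_smul_of_forall_mem_span {K : Submodule k V} (T : K →ₗ[k] V)
    (h : ∀ x : K, T x ∈ k ∙ (x : V)) : ∃ c : k, ∀ x, T x = c • (x : V) := by
  have hK : ∀ x : K, T x ∈ K := fun x => by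
    obtain ⟨c, hc⟩ := Submodule.mem_span_singleton.mp (h x)
    exact hc ▸ K.smul_mem c x.2
  obtain ⟨c, hc⟩ := LinearMap.exists_eq_smul_id_of_forall_notLinearIndependent
    (f := T.codRestrict K hK) fun x hx => by
      obtain ⟨c, hc⟩ := Submodule.mem_span_singleton.mp (h x)
      have := LinearIndependent.pair_iff.mp hx c (-1) (by ext; simp [hc])
      simp at this
  exact ⟨c, fun x => by simpa using congrArg Subtype.val (LinearMap.congr_fun hc x)⟩

end LinearAlgebra

section Commutator

attribute [local instance] LieRing.ofAssociativeRing

lemma lie_pow_eq_nsmul {A : Type*} [Ring A] {a b : A} (h : Commute ⁅a, b⁆ b) (n : ℕ) :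
    ⁅a, b ^ (n + 1)⁆ = (n + 1) • (⁅a, b⁆ * b ^ n) := by
  induction n with
  | zero => simp
  | succ n ih =>
    have leibniz : ⁅a, b ^ (n + 1) * b⁆ = ⁅a, b ^ (n + 1)⁆ * b + b ^ (n + 1) * ⁅a, b⁆ := by
      simp only [Ring.lie_def]; noncomm_ring
    rw [pow_succ b (n + 1), leibniz, ih, ← (h.pow_right (n + 1)).eq, smul_mul_assoc, mul_assoc,
      ← pow_succ, ← succ_nsmul]

/-- Wielandt's argument: `[a, bⁿ⁺¹] = (n + 1) c bⁿ` bounds `(n + 1) |c|` by `2 ‖a‖ ‖b‖`. -/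
lemma lie_eq_zero_of_lie_mem_span_one {𝕜 A : Type*} [RCLike 𝕜] [NormedRing A] [NormedAlgebra 𝕜 A]
    {a b : A} (h : ⁅a, b⁆ ∈ 𝕜 ∙ (1 : A)) : ⁅a, b⁆ = 0 := by
  obtain ⟨c, hc⟩ := Submodule.mem_span_singleton.mp h
  by_contra hab
  have hc0 : c ≠ 0 := fun h0 => hab (by rw [← hc, h0, zero_smul])
  have lie_pow (n : ℕ) : ⁅a, b ^ (n + 1)⁆ = ((n + 1 : ℕ) * c : 𝕜) • b ^ n := by
    rw [lie_pow_eq_nsmul (hc ▸ (Commute.one_left b).smul_left c), ← hc, smul_mul_assoc, one_mul,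
      ← Nat.cast_smul_eq_nsmul 𝕜, smul_smul]
  have pow_ne (n : ℕ) : b ^ n ≠ 0 := by
    induction n with
    | zero =>
      intro h1
      exact hab (by rw [← one_mul ⁅a, b⁆, ← pow_zero b, h1, zero_mul])
    | succ n ih =>
      intro hb
      have := lie_pow n
      rw [hb, lie_zero, eq_comm, smul_eq_zero_iff_left ih, mul_eq_zero] at this
      exact this.elim (Nat.cast_ne_zero.mpr n.succ_ne_zero) hc0
  have bound (n : ℕ) : (n + 1 : ℕ) * ‖c‖ ≤ 2 * ‖a‖ * ‖b‖ := by
    refine le_of_mul_le_mul_right ?_ (norm_pos_iff.mpr (pow_ne n))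
    calc (n + 1 : ℕ) * ‖c‖ * ‖b ^ n‖ = ‖a * b ^ n * b - b * b ^ n * a‖ := by
          rw [mul_assoc a, ← pow_succ, ← pow_succ', ← Ring.lie_def, lie_pow, norm_smul, norm_mul,
            RCLike.norm_natCast]
      _ ≤ ‖a‖ * ‖b ^ n‖ * ‖b‖ + ‖b‖ * ‖b ^ n‖ * ‖a‖ :=
          (norm_sub_le _ _).trans (add_le_add norm_mul₃_le norm_mul₃_le)
      _ = 2 * ‖a‖ * ‖b‖ * ‖b ^ n‖ := by ring
  obtain ⟨n, hn⟩ := exists_nat_gt (2 * ‖a‖ * ‖b‖ / ‖c‖)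
  rw [div_lt_iff₀ (norm_pos_iff.mpr hc0)] at hn
  have := bound n
  push_cast at this
  linarith [norm_nonneg c]

variable {R B : Type*} [CommRing R] [Ring B] [Algebra R B]

lemma lie_eq_zero_of_mem_span_one {a : B} (ha : a ∈ R ∙ (1 : B)) (b : B) : ⁅a, b⁆ = 0 := by
  obtain ⟨c, rfl⟩ := Submodule.mem_span_singleton.mp ha
  simp [Ring.lie_def]

lemma lie_mem_of_mem {𝒜 : Subalgebra R B} {a b : B} (ha : a ∈ 𝒜) (hb : b ∈ 𝒜) : ⁅a, b⁆ ∈ 𝒜 :=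
  𝒜.sub_mem (𝒜.mul_mem ha hb) (𝒜.mul_mem hb ha)

/-- The iterated commutator of `a` with the entries of a list, the head of the list being
applied last. -/
def iterLie (a : B) : List B → B
  | [] => a
  | b :: l => ⁅iterLie a l, b⁆

@[simp] lemma iterLie_nil (a : B) : iterLie a [] = a := rfl

@[simp] lemma iterLie_cons (a b : B) (l : List B) : iterLie a (b :: l) = ⁅iterLie a l, b⁆ := rfl

@[simp] lemma iterLie_zero (l : List B) : iterLie 0 l = 0 := by
  induction l with
  | nil => rfl
  | cons b l ih => simp [ih]

lemma iterLie_append (a : B) (l l' : List B) :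
    iterLie a (l' ++ l) = iterLie (iterLie a l) l' := by
  induction l' with
  | nil => rfl
  | cons b l' ih => simp [ih]

lemma iterLie_mem {𝒜 : Subalgebra R B} {a : B} (ha : a ∈ 𝒜) {l : List B} (hl : ∀ b ∈ l, b ∈ 𝒜) :
    iterLie a l ∈ 𝒜 := by
  induction l with
  | nil => exact ha
  | cons b l ih =>
    rw [List.forall_mem_cons] at hl
    exact lie_mem_of_mem (ih hl.2) hl.1

/-- The defect of `L` from being a Lie derivation, as a bilinear map. -/
def lieDefect (L : B →ₗ[R] B) : B →ₗ[R] B →ₗ[R] B :=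
  LinearMap.mk₂ R (fun a b => L ⁅a, b⁆ - ⁅L a, b⁆ - ⁅a, L b⁆)
    (fun a a' b => by simp only [add_lie, map_add]; abel)
    (fun c a b => by simp only [Ring.lie_def, smul_mul_assoc, mul_smul_comm, ← smul_sub, map_smul])
    (fun a b b' => by simp only [lie_add, map_add]; abel)
    (fun c a b => by simp only [Ring.lie_def, smul_mul_assoc, mul_smul_comm, ← smul_sub, map_smul])

lemma lieDefect_apply (L : B →ₗ[R] B) (a b : B) :
    lieDefect L a b = L ⁅a, b⁆ - ⁅L a, b⁆ - ⁅a, L b⁆ := rfl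

lemma lieDefect_skew (L : B →ₗ[R] B) (a b : B) : -lieDefect L b a = lieDefect L a b := by
  rw [lieDefect_apply, lieDefect_apply, ← lie_skew b a, ← lie_skew (L b) a, ← lie_skew b (L a),
    map_neg]
  abel

/-- The defect of `D` from being a derivation. -/
def derDefect (D : B →ₗ[R] B) (a b : B) : B :=
  D (a * b) - D a * b - a * D b

lemma lieDefect_eq_derDefect_sub (D : B →ₗ[R] B) (a b : B) :
    lieDefect D a b = derDefect D a b - derDefect D b a := by
  simp only [lieDefect_apply, derDefect, Ring.lie_def, map_sub]
  abel

lemma lieDefect_sub_smulRight (L : B →ₗ[R] B) (φ : B →ₗ[R] R) (a b : B) :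
    lieDefect (L - φ.smulRight 1) a b = lieDefect L a b - φ ⁅a, b⁆ • 1 := by
  simp only [lieDefect_apply, LinearMap.sub_apply, LinearMap.smulRight_apply, Ring.lie_def, sub_mul,
    mul_sub, smul_mul_assoc, mul_smul_comm, one_mul, mul_one]
  abel

/-- The defect of `L` from respecting the iterated commutator `iterLie a l`. -/
def iterDefect (L : B →ₗ[R] B) (a : B) : List B → B
  | [] => 0
  | b :: l => ⁅iterDefect L a l, b⁆ + lieDefect L (iterLie a l) b

@[simp] lemma iterDefect_nil (L : B →ₗ[R] B) (a : B) : iterDefect L a [] = 0 := rfl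

@[simp] lemma iterDefect_cons (L : B →ₗ[R] B) (a b : B) (l : List B) :
    iterDefect L a (b :: l) = ⁅iterDefect L a l, b⁆ + lieDefect L (iterLie a l) b := rfl

@[simp] lemma iterDefect_zero (L : B →ₗ[R] B) (l : List B) : iterDefect L 0 l = 0 := by
  induction l with
  | nil => rfl
  | cons b l ih => simp [ih]

lemma iterDefect_append (L : B →ₗ[R] B) (a : B) (l l' : List B) :
    iterDefect L a (l' ++ l) = iterLie (iterDefect L a l) l' + iterDefect L (iterLie a l) l' := by
  induction l' with
  | nil => simp
  | cons b l' ih => simp [ih, iterLie_append, add_assoc]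

/-- `L` respects all `m`-fold iterated commutators of elements of `𝒜`; this is the Lie
`(m + 1)`-derivation identity for a map defined on the whole algebra. -/
def IterLieDeriv (𝒜 : Subalgebra R B) (m : ℕ) (L : B →ₗ[R] B) : Prop :=
  ∀ a ∈ 𝒜, ∀ l : List B, (∀ b ∈ l, b ∈ 𝒜) → l.length = m → iterDefect L a l = 0

lemma IterLieDeriv.mul {𝒜 : Subalgebra R B} {m : ℕ} {L : B →ₗ[R] B} (hL : IterLieDeriv 𝒜 m L)
    (k : ℕ) : IterLieDeriv 𝒜 (k * m) L := by
  induction k with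
  | zero =>
    intro a _ l _ hlen
    rw [zero_mul, List.length_eq_zero_iff] at hlen
    rw [hlen, iterDefect_nil]
  | succ k ih =>
    intro a ha l hl hlen
    rw [Nat.succ_mul] at hlen
    have htake : ∀ b ∈ l.take (k * m), b ∈ 𝒜 := fun b hb => hl b (List.mem_of_mem_take hb)
    have hdrop : ∀ b ∈ l.drop (k * m), b ∈ 𝒜 := fun b hb => hl b (List.mem_of_mem_drop hb)
    rw [← List.take_append_drop (k * m) l, iterDefect_append,
      hL a ha _ hdrop (by simp [hlen]), ih _ (iterLie_mem ha hdrop) _ htake (by simp [hlen]),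
      iterLie_zero, add_zero]

end Commutator

section RankOne

attribute [local instance] LieRing.ofAssociativeRing

variable {𝕜 E : Type*} [NontriviallyNormedField 𝕜] [NormedAddCommGroup E] [NormedSpace 𝕜 E]

/-- The operator `x ⊗ f : v ↦ f v • x`, as a bounded bilinear function of `x` and `f`. -/
def rankOne : E →L[𝕜] StrongDual 𝕜 E →L[𝕜] (E →L[𝕜] E) :=
  (ContinuousLinearMap.smulRightL 𝕜 E E).flip

@[simp] lemma rankOne_apply (x : E) (f : StrongDual 𝕜 E) (v : E) : rankOne x f v = f v • x := rfl

lemma mul_rankOne (A : E →L[𝕜] E) (x : E) (f : StrongDual 𝕜 E) :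
    A * rankOne x f = rankOne (A x) f := by
  ext v; simp

lemma rankOne_mul (x : E) (f : StrongDual 𝕜 E) (A : E →L[𝕜] E) :
    rankOne x f * A = rankOne x (f.comp A) := by
  ext v; simp

lemma lie_apply (A C : E →L[𝕜] E) (v : E) : ⁅A, C⁆ v = A (C v) - C (A v) := rfl

lemma lie_rankOne_rankOne (x y : E) (f g : StrongDual 𝕜 E) :
    ⁅rankOne x f, rankOne y g⁆ = f y • rankOne x g - g x • rankOne y f := by
  ext v
  simp only [lie_apply, rankOne_apply, map_smul, smul_smul, sub_apply, smul_apply, mul_comm]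

lemma eq_zero_of_rankOne_eq_zero {x : E} (hx : x ≠ 0) {f : StrongDual 𝕜 E} (h : rankOne x f = 0) :
    f = 0 := by
  ext v
  have : f v • x = 0 := by rw [← rankOne_apply, h, zero_apply]
  exact (smul_eq_zero.mp this).resolve_right hx

lemma exists_eq_smul_of_lie_rankOne_eq_zero {U : Submodule 𝕜 E} {f : StrongDual 𝕜 E}
    (hf : f ≠ 0) {Y : E →L[𝕜] E} (hY : ∀ x ∈ U, ⁅Y, rankOne x f⁆ = 0) :
    ∃ c : 𝕜, ∀ x ∈ U, Y x = c • x := by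
  obtain ⟨v, hv⟩ := ContinuousLinearMap.exists_ne_zero hf
  refine ⟨(f v)⁻¹ * f (Y v), fun x hx => ?_⟩
  have := DFunLike.congr_fun (hY x hx) v
  rw [lie_apply, rankOne_apply, rankOne_apply, map_smul, zero_apply, sub_eq_zero] at this
  rw [mul_smul, ← this, inv_smul_smul₀ hv]

lemma eq_zero_of_rankOne_mem_span_one {x : E} (hx : x ≠ 0) {s : StrongDual 𝕜 E} (hs : s x = 0)
    (h : rankOne x s ∈ 𝕜 ∙ (1 : E →L[𝕜] E)) : s = 0 := by
  obtain ⟨c, hc⟩ := Submodule.mem_span_singleton.mp h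
  have hcx : c • x = 0 := by simpa [hs] using DFunLike.congr_fun hc x
  rw [(smul_eq_zero.mp hcx).resolve_right hx, zero_smul] at hc
  exact eq_zero_of_rankOne_eq_zero hx hc.symm

/-- The projection `Y ↦ Y - k (Y y) • 1` of the bounded operators; when `k y = 1`, its
kernel consists of the scalars. -/
def scalarFree (y : E) (k : StrongDual 𝕜 E) : (E →L[𝕜] E) →ₗ[𝕜] (E →L[𝕜] E) where
  toFun Y := Y - k (Y y) • 1
  map_add' Y Z := by rw [add_apply, map_add, add_smul]; abel
  map_smul' c Y := by
    rw [smul_apply, map_smul, smul_eq_mul, mul_smul, ← smul_sub, RingHom.id_apply]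

lemma scalarFree_apply (y : E) (k : StrongDual 𝕜 E) (Y : E →L[𝕜] E) (v : E) :
    scalarFree y k Y v = Y v - k (Y y) • v := rfl

lemma scalarFree_eq_zero_iff {y : E} {k : StrongDual 𝕜 E} (hk : k y = 1) {Y : E →L[𝕜] E} :
    scalarFree y k Y = 0 ↔ Y ∈ 𝕜 ∙ (1 : E →L[𝕜] E) := by
  refine ⟨fun h => Submodule.mem_span_singleton.mpr ⟨k (Y y), (sub_eq_zero.mp h).symm⟩, fun h => ?_⟩
  obtain ⟨c, rfl⟩ := Submodule.mem_span_singleton.mp h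
  ext v
  simp [scalarFree_apply, hk]

variable {L : (E →L[𝕜] E) →ₗ[𝕜] (E →L[𝕜] E)} {T : E →ₗ[𝕜] E}

/-- The map `x ↦ L (x ⊗ f) v`, a candidate for an operator implementing `L`: for the inner
derivation `L = [T, ·]`, it differs from `f(v) T` by a scalar. -/
def evalRankOne (L : (E →L[𝕜] E) →ₗ[𝕜] (E →L[𝕜] E)) (f : StrongDual 𝕜 E) (v : E) : E →ₗ[𝕜] E :=
  (ContinuousLinearMap.apply' E (RingHom.id 𝕜) v).toLinearMap ∘ₗ L ∘ₗ (rankOne.flip f).toLinearMap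

@[simp] lemma evalRankOne_apply (f : StrongDual 𝕜 E) (v x : E) :
    evalRankOne L f v x = L (rankOne x f) v := rfl

/-- The value at `x` of `L A - [T, A]`. -/
def innerDefect (L : (E →L[𝕜] E) →ₗ[𝕜] (E →L[𝕜] E)) (T : E →ₗ[𝕜] E) (A : E →L[𝕜] E) (x : E) : E :=
  L A x - T (A x) + A (T x)

lemma innerDefect_sub_smulRight (φ : (E →L[𝕜] E) →ₗ[𝕜] 𝕜) (A : E →L[𝕜] E) (x : E) :
    innerDefect (L - φ.smulRight 1) T A x = innerDefect L T A x - φ A • x := by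
  simp only [innerDefect, LinearMap.sub_apply, LinearMap.smulRight_apply, sub_apply, smul_apply,
    one_apply_eq_self]
  abel

lemma exists_apply_rankOne_eq_smul_add_smul {K : Submodule 𝕜 E} {F : Submodule 𝕜 (StrongDual 𝕜 E)}
    (hL : ∀ x ∈ K, ∀ f ∈ F, ∀ v, f v = 0 → L (rankOne x f) v ∈ 𝕜 ∙ x) {f₀ : StrongDual 𝕜 E}
    (hf₀ : f₀ ∈ F) {v₀ : E} (hfv₀ : f₀ v₀ = 1) {f : StrongDual 𝕜 E} (hf : f ∈ F) (v : E) :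
    ∃ c : 𝕜, ∀ x ∈ K, L (rankOne x f) v = f v • L (rankOne x f₀) v₀ + c • x := by
  have hmem (x : K) : L (rankOne (x : E) f) v - f v • L (rankOne (x : E) f₀) v₀ ∈ 𝕜 ∙ (x : E) := by
    let p : F →ₗ[𝕜] E →ₗ[𝕜] 𝕜 := (topDualPairing 𝕜 E).domRestrict F
    let S : F →ₗ[𝕜] E →ₗ[𝕜] E ⧸ (𝕜 ∙ (x : E)) :=
      (((ContinuousLinearMap.coeLM 𝕜 ∘ₗ L ∘ₗ (rankOne (x : E)).toLinearMap).compr₂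
        (𝕜 ∙ (x : E)).mkQ).domRestrict F)
    obtain ⟨b, hb⟩ := exists_eq_smul_of_forall_apply_eq_zero (V := F) p S fun f v hfv =>
      (Submodule.Quotient.mk_eq_zero _).mpr (hL x x.2 f f.2 v hfv)
    refine (Submodule.Quotient.eq _).mp ((hb ⟨f, hf⟩ v).trans ?_)
    have hb₀ : S ⟨f₀, hf₀⟩ v₀ = b := (hb ⟨f₀, hf₀⟩ v₀).trans (by
      rw [show p ⟨f₀, hf₀⟩ v₀ = 1 from hfv₀, one_smul])
    rw [← hb₀]
    rfl
  obtain ⟨c, hc⟩ := exists_eq_smul_of_forall_mem_span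
    ((evalRankOne L f v - f v • evalRankOne L f₀ v₀) ∘ₗ K.subtype) hmem
  exact ⟨c, fun x hx => by simpa [sub_eq_iff_eq_add'] using hc ⟨x, hx⟩⟩

lemma smul_add_smul_mem_span_pair_of_lieDefect_eq_zero {x z : E} {f g : StrongDual 𝕜 E}
    (hfx : f x = 0) (h : lieDefect L (rankOne z f) (rankOne x g) = 0) {v : E} (hfv : f v = 0) :
    g z • L (rankOne x f) v + g v • L (rankOne z f) x ∈ Submodule.span 𝕜 {x, z} := by
  have hv := DFunLike.congr_fun h v
  simp only [lieDefect_apply, lie_rankOne_rankOne, hfx, zero_smul, zero_sub, map_neg, map_smul,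
    neg_apply, sub_apply, smul_apply, lie_apply, rankOne_apply, hfv, map_zero, zero_apply] at hv
  rw [Submodule.mem_span_pair]
  refine ⟨g (L (rankOne z f) v), -f (L (rankOne x g) v), ?_⟩
  linear_combination (norm := module) hv

end RankOne

section SeparatingDual

attribute [local instance] LieRing.ofAssociativeRing

open StrongDual (polarSubmodule mem_polarSubmodule)

lemma polarSubmodule_anti {𝕜 E : Type*} [NontriviallyNormedField 𝕜] [AddCommGroup E] [Module 𝕜 E]
    [TopologicalSpace E] {M N : Submodule 𝕜 E} (h : M ≤ N) :
    polarSubmodule 𝕜 N ≤ polarSubmodule 𝕜 M := fun f hf => by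
  rw [mem_polarSubmodule] at hf ⊢
  exact fun y hy => hf y (h hy)

variable {𝕜 E : Type*} [RCLike 𝕜] [NormedAddCommGroup E] [NormedSpace 𝕜 E]

lemma exists_mem_polarSubmodule_eq_one {N : Submodule 𝕜 E} (hN : IsClosed (N : Set E)) {x : E}
    (hx : x ∉ N) : ∃ g ∈ polarSubmodule 𝕜 N, g x = 1 := by
  obtain ⟨g, hg⟩ := SeparatingDual.exists_eq_one (R := 𝕜) (x := N.mkQL x) (by simpa using hx)
  refine ⟨g.comp N.mkQL, (mem_polarSubmodule 𝕜 N _).mpr fun y hy => ?_, by simpa using hg⟩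
  have : N.mkQL y = 0 := by simpa using hy
  simp [this]

lemma exists_eq_rankOne_of_forall_mem_span {K : Submodule 𝕜 E} (T : K →ₗ[𝕜] E →L[𝕜] E)
    (hT : ∀ (x : K) v, T x v ∈ 𝕜 ∙ (x : E)) : ∃ s, ∀ x, T x = rankOne (x : E) s := by
  by_cases hK : ∃ x : K, (x : E) ≠ 0
  · obtain ⟨x₀, hx₀⟩ := hK
    obtain ⟨k, hk⟩ := SeparatingDual.exists_eq_one (R := 𝕜) hx₀
    refine ⟨k.comp (T x₀), fun x => ?_⟩
    ext v
    obtain ⟨c, hc⟩ := exists_eq_smul_of_forall_mem_span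
      ((ContinuousLinearMap.apply' E (RingHom.id 𝕜) v).toLinearMap ∘ₗ T) (fun x => hT x v)
    have hc' : ∀ x, T x v = c • (x : E) := hc
    simp [hc', hk]
  · push Not at hK
    refine ⟨0, fun x => ?_⟩
    rw [(Subtype.ext (hK x) : x = 0), map_zero, map_zero]

variable {D : (E →L[𝕜] E) →ₗ[𝕜] (E →L[𝕜] E)} {T : E →ₗ[𝕜] E}

/-- Evaluating `G(x ⊗ h, x ⊗ g) = 0`, with `h x = 0` and `g x = 1`, yields
`h (D (x ⊗ g) v) = g(v) h(T x)`. -/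
lemma apply_rankOne_sub_smul_mem_span {x : E} {g : StrongDual 𝕜 E} (hgx : g x = 1)
    (hT : ∀ f, innerDefect D T (rankOne x f) x = 0)
    (hsq : ∀ h, h x = 0 → lieDefect D (rankOne x h) (rankOne x g) = 0) (v : E) :
    D (rankOne x g) v - g v • T x ∈ 𝕜 ∙ x := by
  by_contra hv
  obtain ⟨h, hh, hhv⟩ := exists_mem_polarSubmodule_eq_one
    (Submodule.closed_of_finiteDimensional (𝕜 ∙ x)) hv
  have hhx : h x = 0 := (mem_polarSubmodule 𝕜 _ h).mp hh x (Submodule.mem_span_singleton_self x)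
  have hDg := congrArg g (hT g)
  have hDh := congrArg g (hT h)
  have hG := congrArg g (DFunLike.congr_fun (hsq h hhx) v)
  simp only [innerDefect, lieDefect_apply, lie_rankOne_rankOne, lie_apply, rankOne_apply, map_add,
    map_sub, map_smul, sub_apply, zero_apply, map_zero, hhx, hgx, smul_eq_mul, zero_smul,
    zero_sub, neg_apply, map_neg, one_smul] at hDg hDh hG hhv
  refine one_ne_zero (α := 𝕜) ?_
  linear_combination -hhv - hG - g v * hDh + h v * hDg

end SeparatingDual

section Nest

attribute [local instance] LieRing.ofAssociativeRing

open StrongDual (polarSubmodule mem_polarSubmodule)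

lemma inf_ne_bot_of_le_or_ge {α : Type*} [SemilatticeInf α] [OrderBot α] {a b : α}
    (h : a ≤ b ∨ b ≤ a) (ha : a ≠ ⊥) (hb : b ≠ ⊥) : a ⊓ b ≠ ⊥ := by
  rcases h with h | h
  · rwa [inf_eq_left.mpr h]
  · rwa [inf_eq_right.mpr h]

variable {X : Type*} [NormedAddCommGroup X] [NormedSpace ℂ X]

variable {𝒩 : Set (Submodule ℂ X)}

/-- The largest subspace of vectors `x` for which `x ⊗ f` belongs to `Alg 𝒩`: the intersection
of the members of `𝒩` on which `f` does not vanish identically. -/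
def nestHull (𝒩 : Set (Submodule ℂ X)) (f : StrongDual ℂ X) : Submodule ℂ X :=
  sInf {M ∈ 𝒩 | f ∉ polarSubmodule ℂ M}

lemma mem_nestHull {f : StrongDual ℂ X} {x : X} :
    x ∈ nestHull 𝒩 f ↔ ∀ M ∈ 𝒩, f ∈ polarSubmodule ℂ M ∨ x ∈ M := by
  simp only [nestHull, Submodule.mem_sInf, Set.mem_ofPred_eq, and_imp, or_iff_not_imp_left]

lemma rankOne_mem_nestAlgebra {x : X} {f : StrongDual ℂ X} (hx : x ∈ nestHull 𝒩 f) :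
    rankOne x f ∈ nestAlgebra 𝒩 := by
  intro M hM y hy
  rcases mem_nestHull.mp hx M hM with hf | hxM
  · rw [rankOne_apply, (mem_polarSubmodule ℂ M f).mp hf y hy, zero_smul]
    exact M.zero_mem
  · exact M.smul_mem _ hxM

lemma inf_nestHull_le_nestHull_sub_smul (f g : StrongDual ℂ X) (c : ℂ) :
    nestHull 𝒩 f ⊓ nestHull 𝒩 g ≤ nestHull 𝒩 (f - c • g) := by
  rintro x ⟨hf, hg⟩
  refine mem_nestHull.mpr fun M hM => ?_
  by_cases hx : x ∈ M
  · exact Or.inr hx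
  · have hfM := (mem_nestHull.mp hf M hM).resolve_right hx
    have hgM := (mem_nestHull.mp hg M hM).resolve_right hx
    exact Or.inl (Submodule.sub_mem _ hfM (Submodule.smul_mem _ c hgM))

lemma comp_mem_polarSubmodule {N : Submodule ℂ X} (hN : N ∈ 𝒩) {A : X →L[ℂ] X}
    (hA : A ∈ nestAlgebra 𝒩) {f : StrongDual ℂ X} (hf : f ∈ polarSubmodule ℂ N) :
    f.comp A ∈ polarSubmodule ℂ N := by
  rw [mem_polarSubmodule] at hf ⊢
  exact fun y hy => hf _ (hA N hN y hy)

namespace IsNest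

lemma exists_ne_bot_ne_top (h𝒩 : IsNest 𝒩) (hnt : 𝒩 ≠ {⊥, ⊤}) :
    ∃ N ∈ 𝒩, N ≠ ⊥ ∧ N ≠ ⊤ := by
  contrapose! hnt
  refine Set.Subset.antisymm (fun N hN => or_iff_not_imp_left.mpr (hnt N hN)) ?_
  rintro N (rfl | rfl)
  exacts [h𝒩.bot_mem, h𝒩.top_mem]

lemma nestHull_mem (h𝒩 : IsNest 𝒩) (f : StrongDual ℂ X) : nestHull 𝒩 f ∈ 𝒩 :=
  h𝒩.sInf_mem _ (Set.sep_subset _ _)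

lemma le_nestHull (h𝒩 : IsNest 𝒩) {N : Submodule ℂ X} (hN : N ∈ 𝒩) {f : StrongDual ℂ X}
    (hf : f ∈ polarSubmodule ℂ N) : N ≤ nestHull 𝒩 f := by
  refine fun x hx => mem_nestHull.mpr fun M hM => ?_
  rw [mem_polarSubmodule] at hf ⊢
  exact (h𝒩.total M hM N hN).imp (fun h y hy => hf y (h hy)) fun h => h hx

lemma nestHull_inf_ker_le_or_ge (h𝒩 : IsNest 𝒩) (f : StrongDual ℂ X) {M : Submodule ℂ X}
    (hM : M ∈ 𝒩) : nestHull 𝒩 f ⊓ f.ker ≤ M ∨ M ≤ nestHull 𝒩 f ⊓ f.ker := by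
  by_cases hf : f ∈ polarSubmodule ℂ M
  · exact Or.inr (le_inf (h𝒩.le_nestHull hM hf) ((mem_polarSubmodule ℂ M f).mp hf))
  · exact Or.inl (inf_le_left.trans (sInf_le ⟨hM, hf⟩))

lemma inf_mem (h𝒩 : IsNest 𝒩) {M N : Submodule ℂ X} (hM : M ∈ 𝒩) (hN : N ∈ 𝒩) : M ⊓ N ∈ 𝒩 := by
  rw [← sInf_pair]
  exact h𝒩.sInf_mem _ (Set.pair_subset hM hN)

lemma exists_eq_one_nestHull_ne_bot (h𝒩 : IsNest 𝒩) {x : X} (hx : x ≠ 0) :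
    ∃ g : StrongDual ℂ X, g x = 1 ∧ nestHull 𝒩 g ≠ ⊥ := by
  by_cases h : ∃ M ∈ 𝒩, M ≠ ⊥ ∧ x ∉ M
  · obtain ⟨M, hM, hM0, hxM⟩ := h
    obtain ⟨g, hg, hgx⟩ := exists_mem_polarSubmodule_eq_one (h𝒩.closed M hM) hxM
    exact ⟨g, hgx, ne_bot_of_le_ne_bot hM0 (h𝒩.le_nestHull hM hg)⟩
  · push Not at h
    obtain ⟨g, hg⟩ := SeparatingDual.exists_eq_one (R := ℂ) hx
    refine ⟨g, hg, (Submodule.ne_bot_iff _).mpr ⟨x, mem_nestHull.mpr fun M hM => ?_, hx⟩⟩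
    rcases eq_or_ne M ⊥ with rfl | hM0
    · exact Or.inl (by simp [mem_polarSubmodule])
    · exact Or.inr (h M hM hM0)

lemma exists_apply_eq_zero_nestHull_ne_bot (h𝒩 : IsNest 𝒩) {x w : X} (hw : w ∉ ℂ ∙ x) :
    ∃ g : StrongDual ℂ X, g x = 0 ∧ g w ≠ 0 ∧ nestHull 𝒩 g ≠ ⊥ := by
  rcases eq_or_ne x 0 with rfl | hx
  · obtain ⟨g, hgw, hg⟩ := h𝒩.exists_eq_one_nestHull_ne_bot (x := w) (by simpa using hw)
    exact ⟨g, map_zero g, by simp [hgw], hg⟩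
  · obtain ⟨g₁, hg₁x, hg₁⟩ := h𝒩.exists_eq_one_nestHull_ne_bot hx
    obtain ⟨g₂, hg₂w, hg₂⟩ := h𝒩.exists_eq_one_nestHull_ne_bot (x := w - g₁ w • x) fun h =>
      hw (Submodule.mem_span_singleton.mpr ⟨g₁ w, (sub_eq_zero.mp h).symm⟩)
    refine ⟨g₂ - g₂ x • g₁, by simp [hg₁x], ?_, ?_⟩
    · rw [map_sub, map_smul, smul_eq_mul, mul_comm] at hg₂w
      simp [hg₂w]
    · exact ne_bot_of_le_ne_bot
        (inf_ne_bot_of_le_or_ge (h𝒩.total _ (h𝒩.nestHull_mem g₂) _ (h𝒩.nestHull_mem g₁)) hg₂ hg₁)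
        (inf_nestHull_le_nestHull_sub_smul g₂ g₁ _)

/-- If `Y y = c y` and `Y` commutes with `y ⊗ g` then `g ∘ Y = c g`; the functionals `g` vanishing
at `x` for which some `y ⊗ g` is available separate the points of `X / ℂx`. -/
lemma sub_smul_mem_span_of_lie_rankOne_eq_zero (h𝒩 : IsNest 𝒩) {U : Submodule ℂ X} (hU : U ≠ ⊥)
    (hU𝒩 : ∀ M ∈ 𝒩, U ≤ M ∨ M ≤ U) {Y : X →L[ℂ] X} {c : ℂ} (hYU : ∀ y ∈ U, Y y = c • y) {x : X}
    (hY : ∀ y ∈ U, ∀ g, y ∈ nestHull 𝒩 g → g x = 0 → ⁅Y, rankOne y g⁆ = 0) (v : X) :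
    Y v - c • v ∈ ℂ ∙ x := by
  by_contra hv
  obtain ⟨g, hgx, hgv, hg⟩ := h𝒩.exists_apply_eq_zero_nestHull_ne_bot hv
  obtain ⟨y, ⟨hyU, hyg⟩, hy⟩ := (Submodule.ne_bot_iff _).mp
    (inf_ne_bot_of_le_or_ge (hU𝒩 _ (h𝒩.nestHull_mem g)) hU hg)
  have hcomm := DFunLike.congr_fun (hY y hyU g hyg hgx) v
  rw [lie_apply, rankOne_apply, rankOne_apply, map_smul, hYU y hyU, smul_smul, ← sub_smul,
    zero_apply, smul_eq_zero_iff_left hy, sub_eq_zero] at hcomm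
  exact hgv (by rw [map_sub, map_smul, ← hcomm, smul_eq_mul, mul_comm, sub_self])

lemma mem_span_one_of_lie_eq_zero (h𝒩 : IsNest 𝒩) (hnt : 𝒩 ≠ {⊥, ⊤})
    {Y : X →L[ℂ] X} (hY : ∀ A ∈ nestAlgebra 𝒩, ⁅Y, A⁆ = 0) : Y ∈ ℂ ∙ (1 : X →L[ℂ] X) := by
  obtain ⟨N, hN, hN0, hN1⟩ := h𝒩.exists_ne_bot_ne_top hnt
  obtain ⟨v, hv⟩ := SetLike.exists_not_mem_of_ne_top N hN1
  obtain ⟨f, hfN, hfv⟩ := exists_mem_polarSubmodule_eq_one (h𝒩.closed N hN) hv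
  obtain ⟨c, hc⟩ := exists_eq_smul_of_lie_rankOne_eq_zero (U := N) (f := f)
    (fun h => by simp [h] at hfv)
    fun x hx => hY _ (rankOne_mem_nestAlgebra (h𝒩.le_nestHull hN hfN hx))
  refine Submodule.mem_span_singleton.mpr ⟨c, ?_⟩
  ext v
  have := h𝒩.sub_smul_mem_span_of_lie_rankOne_eq_zero hN0 (h𝒩.total N hN) hc (x := 0)
    (fun y _ g hy _ => hY _ (rankOne_mem_nestAlgebra hy)) v
  rw [Submodule.span_zero_singleton, Submodule.mem_bot, sub_eq_zero] at this
  exact this.symm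

lemma mem_span_one_of_iterLie_eq_zero (h𝒩 : IsNest 𝒩) (hnt : 𝒩 ≠ {⊥, ⊤}) (k : ℕ)
    {Y : X →L[ℂ] X} (hY : ∀ l : List (X →L[ℂ] X), (∀ b ∈ l, b ∈ nestAlgebra 𝒩) → l.length = k →
      iterLie Y l = 0) : Y ∈ ℂ ∙ (1 : X →L[ℂ] X) := by
  induction k generalizing Y with
  | zero =>
    rw [← iterLie_nil Y, hY [] (by simp) rfl]
    exact Submodule.zero_mem _
  | succ k ih =>
    refine h𝒩.mem_span_one_of_lie_eq_zero hnt fun A hA =>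
      lie_eq_zero_of_lie_mem_span_one (𝕜 := ℂ) (ih fun l hl hlen => ?_)
    have := hY (l ++ [A]) (by simpa [or_imp, forall_and, hA] using hl) (by simp [hlen])
    rwa [iterLie_append] at this

lemma iterDefect_mem_span_one (h𝒩 : IsNest 𝒩) (hnt : 𝒩 ≠ {⊥, ⊤}) {m : ℕ} (hm : m ≠ 0)
    {L : (X →L[ℂ] X) →ₗ[ℂ] (X →L[ℂ] X)} (hL : IterLieDeriv (nestAlgebra 𝒩) m L) {a : X →L[ℂ] X}
    (ha : a ∈ nestAlgebra 𝒩) {l : List (X →L[ℂ] X)} (hl : ∀ b ∈ l, b ∈ nestAlgebra 𝒩)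
    (h : iterLie a l = 0) : iterDefect L a l ∈ ℂ ∙ (1 : X →L[ℂ] X) := by
  refine h𝒩.mem_span_one_of_iterLie_eq_zero hnt (l.length * m - l.length) fun l' hl' hlen => ?_
  have := hL.mul l.length a ha (l' ++ l)
    (fun b hb => (List.mem_append.mp hb).elim (hl' b) (hl b))
    (by rw [List.length_append, hlen, Nat.sub_add_cancel (Nat.le_mul_of_pos_right _ (by omega))])
  rwa [iterDefect_append, h, iterDefect_zero, add_zero] at this

lemma lieDefect_mem_span_one (h𝒩 : IsNest 𝒩) (hnt : 𝒩 ≠ {⊥, ⊤}) {m : ℕ} (hm : m ≠ 0)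
    {L : (X →L[ℂ] X) →ₗ[ℂ] (X →L[ℂ] X)} (hL : IterLieDeriv (nestAlgebra 𝒩) m L)
    {a b : X →L[ℂ] X} (ha : a ∈ nestAlgebra 𝒩) (hb : b ∈ nestAlgebra 𝒩) (hab : ⁅a, b⁆ = 0) :
    lieDefect L a b ∈ ℂ ∙ (1 : X →L[ℂ] X) := by
  simpa using h𝒩.iterDefect_mem_span_one hnt hm hL ha (l := [b]) (by simpa using hb) hab

lemma lie_lieDefect_eq_zero (h𝒩 : IsNest 𝒩) (hnt : 𝒩 ≠ {⊥, ⊤}) {m : ℕ} (hm : m ≠ 0)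
    {L : (X →L[ℂ] X) →ₗ[ℂ] (X →L[ℂ] X)} (hL : IterLieDeriv (nestAlgebra 𝒩) m L)
    {a b c : X →L[ℂ] X} (ha : a ∈ nestAlgebra 𝒩) (hb : b ∈ nestAlgebra 𝒩)
    (hc : c ∈ nestAlgebra 𝒩) (habc : ⁅⁅a, b⁆, c⁆ = 0) : ⁅lieDefect L a b, c⁆ = 0 := by
  have h := h𝒩.iterDefect_mem_span_one hnt hm hL ha (l := [c, b]) (by simp [hb, hc]) habc
  have h' := h𝒩.lieDefect_mem_span_one hnt hm hL (lie_mem_of_mem ha hb) hc habc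
  refine lie_eq_zero_of_lie_mem_span_one (𝕜 := ℂ) ?_
  simpa using Submodule.sub_mem _ h h'

end IsNest

end Nest

section SquareZero

attribute [local instance] LieRing.ofAssociativeRing

variable {X : Type*} [NormedAddCommGroup X] [NormedSpace ℂ X]

variable {𝒩 : Set (Submodule ℂ X)} {m : ℕ} {L : (X →L[ℂ] X) →ₗ[ℂ] (X →L[ℂ] X)}

/-- Modulo scalars, the Lie defect of `L` at `z ⊗ f` and `x ⊗ g`, with `z` and `x` in `U`, is
`g(z) x ⊗ s`. -/
structure IsDefectSymbol (𝒩 : Set (Submodule ℂ X)) (L : (X →L[ℂ] X) →ₗ[ℂ] (X →L[ℂ] X))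
    (U : Submodule ℂ X) (f s : StrongDual ℂ X) : Prop where
  apply_eq_zero : ∀ x ∈ U, s x = 0
  lieDefect_sub_mem : ∀ z ∈ U, ∀ x ∈ U, ∀ g, x ∈ nestHull 𝒩 g →
    lieDefect L (rankOne z f) (rankOne x g) - g z • rankOne x s ∈ ℂ ∙ (1 : X →L[ℂ] X)

namespace IsNest

lemma exists_lieDefect_sub_mem_span (h𝒩 : IsNest 𝒩) (hnt : 𝒩 ≠ {⊥, ⊤}) (hm : m ≠ 0)
    (hL : IterLieDeriv (nestAlgebra 𝒩) m L) {f : StrongDual ℂ X} (hf : f ≠ 0)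
    (hU : nestHull 𝒩 f ⊓ f.ker ≠ ⊥) {z x : X} (hz : z ∈ nestHull 𝒩 f ⊓ f.ker)
    (hx : x ∈ nestHull 𝒩 f ⊓ f.ker) {g : StrongDual ℂ X}
    (hxg : rankOne x g ∈ nestAlgebra 𝒩) :
    ∃ c : ℂ, (∀ y ∈ nestHull 𝒩 f ⊓ f.ker, lieDefect L (rankOne z f) (rankOne x g) y = c • y) ∧
      ∀ v, lieDefect L (rankOne z f) (rankOne x g) v - c • v ∈ ℂ ∙ x := by
  have hcomm : ∀ y ∈ nestHull 𝒩 f ⊓ f.ker, ∀ h, y ∈ nestHull 𝒩 h → h x = 0 →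
      ⁅lieDefect L (rankOne z f) (rankOne x g), rankOne y h⁆ = 0 := by
    intro y hy h hyh hhx
    refine h𝒩.lie_lieDefect_eq_zero hnt hm hL (rankOne_mem_nestAlgebra hz.1) hxg
      (rankOne_mem_nestAlgebra hyh) ?_
    have hfx : f x = 0 := hx.2
    have hfy : f y = 0 := hy.2
    rw [lie_rankOne_rankOne, hfx, zero_smul, zero_sub, neg_lie, smul_lie, lie_rankOne_rankOne, hfy,
      hhx, zero_smul, zero_smul, sub_zero, smul_zero, neg_zero]
  obtain ⟨c, hc⟩ := exists_eq_smul_of_lie_rankOne_eq_zero hf fun y hy => hcomm y hy f hy.1 hx.2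
  exact ⟨c, hc, h𝒩.sub_smul_mem_span_of_lie_rankOne_eq_zero hU
    (fun M hM => h𝒩.nestHull_inf_ker_le_or_ge f hM) hc hcomm⟩

lemma exists_lieDefect_sub_rankOne_mem (h𝒩 : IsNest 𝒩) (hnt : 𝒩 ≠ {⊥, ⊤}) (hm : m ≠ 0)
    (hL : IterLieDeriv (nestAlgebra 𝒩) m L) {f : StrongDual ℂ X} (hf : f ≠ 0)
    (hU : nestHull 𝒩 f ⊓ f.ker ≠ ⊥) {z : X} (hz : z ∈ nestHull 𝒩 f ⊓ f.ker)
    {g : StrongDual ℂ X} (hg : nestHull 𝒩 g ≠ ⊥) :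
    ∃ s, (∀ y ∈ nestHull 𝒩 f ⊓ f.ker, s y = 0) ∧
      ∀ x ∈ nestHull 𝒩 f ⊓ f.ker ⊓ nestHull 𝒩 g,
        lieDefect L (rankOne z f) (rankOne x g) - rankOne x s ∈ ℂ ∙ (1 : X →L[ℂ] X) := by
  obtain ⟨y, hy, hy0⟩ := (Submodule.ne_bot_iff _).mp (inf_ne_bot_of_le_or_ge
    (h𝒩.nestHull_inf_ker_le_or_ge f (h𝒩.nestHull_mem g)) hU hg)
  obtain ⟨k, hky⟩ := SeparatingDual.exists_eq_one (R := ℂ) hy0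
  let T : ↥(nestHull 𝒩 f ⊓ f.ker ⊓ nestHull 𝒩 g) →ₗ[ℂ] (X →L[ℂ] X) :=
    scalarFree y k ∘ₗ lieDefect L (rankOne z f) ∘ₗ (rankOne.flip g).toLinearMap ∘ₗ
      Submodule.subtype _
  have hT : ∀ x, (∀ w ∈ nestHull 𝒩 f ⊓ f.ker, T x w = 0) ∧ ∀ v, T x v ∈ ℂ ∙ (x : X) := by
    intro x
    obtain ⟨c, hcU, hc⟩ := h𝒩.exists_lieDefect_sub_mem_span hnt hm hL hf hU hz x.2.1
      (rankOne_mem_nestAlgebra x.2.2)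
    have hTx (v : X) : T x v = lieDefect L (rankOne z f) (rankOne (x : X) g) v - c • v := by
      simp [T, scalarFree_apply, hcU y hy.1, hky]
    exact ⟨fun w hw => by rw [hTx, hcU w hw, sub_self], fun v => hTx v ▸ hc v⟩
  obtain ⟨s, hs⟩ := exists_eq_rankOne_of_forall_mem_span T fun x => (hT x).2
  have hsU : ∀ w ∈ nestHull 𝒩 f ⊓ f.ker, s w = 0 := fun w hw => by
    have := (hT ⟨y, hy⟩).1 w hw
    rwa [hs, rankOne_apply, smul_eq_zero_iff_left hy0] at this
  refine ⟨s, hsU, fun x hx => (scalarFree_eq_zero_iff hky).mp ?_⟩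
  have hreduced : scalarFree y k (rankOne x s) = rankOne x s := by
    ext v
    simp [scalarFree_apply, hsU y hy.1]
  rw [map_sub, hreduced, sub_eq_zero]
  exact hs ⟨x, hx⟩

lemma exists_lieDefect_sub_smul_mem (h𝒩 : IsNest 𝒩) (hnt : 𝒩 ≠ {⊥, ⊤}) (hm : m ≠ 0)
    (hL : IterLieDeriv (nestAlgebra 𝒩) m L) {f : StrongDual ℂ X} {x : X} (hfx : f x = 0) :
    ∃ R, ∀ z, rankOne z f ∈ nestAlgebra 𝒩 → ∀ g, rankOne x g ∈ nestAlgebra 𝒩 →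
      lieDefect L (rankOne z f) (rankOne x g) - g z • R ∈ ℂ ∙ (1 : X →L[ℂ] X) := by
  let V := (nestAlgebra 𝒩).toSubmodule.comap (rankOne.flip f).toLinearMap
  let W := (nestAlgebra 𝒩).toSubmodule.comap (rankOne x).toLinearMap
  let p : V →ₗ[ℂ] W →ₗ[ℂ] ℂ := (topDualPairing ℂ X).flip.domRestrict₁₂ V W
  let T : V →ₗ[ℂ] W →ₗ[ℂ] (X →L[ℂ] X) ⧸ (ℂ ∙ (1 : X →L[ℂ] X)) :=
    (((lieDefect L).compl₁₂ (rankOne.flip f).toLinearMap (rankOne x).toLinearMap).compr₂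
      (ℂ ∙ (1 : X →L[ℂ] X)).mkQ).domRestrict₁₂ V W
  obtain ⟨R, hR⟩ := exists_eq_smul_of_forall_apply_eq_zero (V := V) (W := W) p T fun z g hgz => by
    have hgz : (g : StrongDual ℂ X) (z : X) = 0 := hgz
    refine (Submodule.Quotient.mk_eq_zero _).mpr (h𝒩.lieDefect_mem_span_one hnt hm hL z.2 g.2 ?_)
    simp [lie_rankOne_rankOne, hfx, hgz]
  obtain ⟨R, rfl⟩ := Submodule.mkQ_surjective _ R
  exact ⟨R, fun z hz g hg => (Submodule.Quotient.eq _).mp (hR ⟨z, hz⟩ ⟨g, hg⟩)⟩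

lemma exists_isDefectSymbol (h𝒩 : IsNest 𝒩) (hnt : 𝒩 ≠ {⊥, ⊤}) (hm : m ≠ 0)
    (hL : IterLieDeriv (nestAlgebra 𝒩) m L) {f : StrongDual ℂ X} (hf : f ≠ 0)
    (hU : nestHull 𝒩 f ⊓ f.ker ≠ ⊥) :
    ∃ s, IsDefectSymbol 𝒩 L (nestHull 𝒩 f ⊓ f.ker) f s := by
  obtain ⟨z₁, hz₁, hz₁0⟩ := (Submodule.ne_bot_iff _).mp hU
  obtain ⟨g₁, hg₁z₁, hg₁⟩ := h𝒩.exists_eq_one_nestHull_ne_bot hz₁0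
  obtain ⟨s, hsU, hs⟩ := h𝒩.exists_lieDefect_sub_rankOne_mem hnt hm hL hf hU hz₁ hg₁
  refine ⟨s, hsU, fun z hz x hx g hxg => ?_⟩
  rcases eq_or_ne x 0 with rfl | hx0
  · simp
  have hg : nestHull 𝒩 g ≠ ⊥ := (Submodule.ne_bot_iff _).mpr ⟨x, hxg, hx0⟩
  obtain ⟨s', hsU', hs'⟩ := h𝒩.exists_lieDefect_sub_rankOne_mem hnt hm hL hf hU hz hg
  obtain ⟨w, ⟨hwU, hwg, hwg₁⟩, hw0⟩ := (Submodule.ne_bot_iff _).mp (inf_ne_bot_of_le_or_ge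
    (h𝒩.nestHull_inf_ker_le_or_ge f (h𝒩.inf_mem (h𝒩.nestHull_mem g) (h𝒩.nestHull_mem g₁))) hU
    (inf_ne_bot_of_le_or_ge (h𝒩.total _ (h𝒩.nestHull_mem g) _ (h𝒩.nestHull_mem g₁)) hg hg₁))
  obtain ⟨R, hR⟩ := h𝒩.exists_lieDefect_sub_smul_mem hnt hm hL (f := f) (x := w) hwU.2
  have hR₁ := hR z₁ (rankOne_mem_nestAlgebra hz₁.1) g₁ (rankOne_mem_nestAlgebra hwg₁)
  have hR' := hR z (rankOne_mem_nestAlgebra hz.1) g (rankOne_mem_nestAlgebra hwg)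
  rw [hg₁z₁, one_smul] at hR₁
  have hss' : s' - g z • s = 0 := by
    refine eq_zero_of_rankOne_mem_span_one hw0 (by simp [hsU w hwU, hsU' w hwU]) ?_
    convert Submodule.sub_mem _ (Submodule.sub_mem _ hR' (hs' w ⟨hwU, hwg⟩))
      (Submodule.smul_mem _ (g z) (Submodule.sub_mem _ hR₁ (hs w ⟨hwU, hwg₁⟩))) using 1
    rw [map_sub, map_smul]
    module
  rw [← map_smul, ← sub_eq_zero.mp hss']
  exact hs' x ⟨hx, hxg⟩

/-- Along a chain of commutators `x_{j+1} ⊗ f = [x_j ⊗ f, x_{j+1} ⊗ g_j]` with `g_j(x_j) = -1`,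
every step contributes `-x_{j+1} ⊗ s` to the iterated defect. -/
lemma exists_list_iterDefect_add_mem (h𝒩 : IsNest 𝒩) {U : Submodule ℂ X} (hU : U ≠ ⊥)
    (hU𝒩 : ∀ M ∈ 𝒩, U ≤ M ∨ M ≤ U) (j : ℕ) :
    ∃ K ∈ 𝒩, K ≠ ⊥ ∧ ∀ x ∈ U ⊓ K, ∃ x₀ ∈ U, ∃ l : List (X →L[ℂ] X),
      (∀ b ∈ l, b ∈ nestAlgebra 𝒩) ∧ l.length = j ∧
      ∀ f s, U ≤ f.ker → IsDefectSymbol 𝒩 L U f s →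
        iterLie (rankOne x₀ f) l = rankOne x f ∧
        iterDefect L (rankOne x₀ f) l + j • rankOne x s ∈ ℂ ∙ (1 : X →L[ℂ] X) := by
  induction j with
  | zero =>
    exact ⟨⊤, h𝒩.top_mem, ne_bot_of_le_ne_bot hU le_top, fun x hx =>
      ⟨x, hx.1, [], by simp, rfl, fun f s _ _ => by simp⟩⟩
  | succ j ih =>
    obtain ⟨K, hK, hK0, hchain⟩ := ih
    obtain ⟨z, hz, hz0⟩ := (Submodule.ne_bot_iff _).mp (inf_ne_bot_of_le_or_ge (hU𝒩 K hK) hU hK0)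
    obtain ⟨x₀, hx₀, l, hl, hlen, hlf⟩ := hchain z hz
    obtain ⟨g, hgz, hg⟩ := h𝒩.exists_eq_one_nestHull_ne_bot (neg_ne_zero.mpr hz0)
    rw [map_neg, neg_eq_iff_eq_neg] at hgz
    refine ⟨nestHull 𝒩 g, h𝒩.nestHull_mem g, hg, fun x hx => ⟨x₀, hx₀, rankOne x g :: l, ?_, ?_,
      fun f s hf hs => ?_⟩⟩
    · exact List.forall_mem_cons.mpr ⟨rankOne_mem_nestAlgebra hx.2, hl⟩
    · rw [List.length_cons, hlen]
    · obtain ⟨hiter, hdefect⟩ := hlf f s hf hs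
      have hfx : f x = 0 := hf hx.1
      have hstep := hs.lieDefect_sub_mem z hz.1 x hx.1 g hx.2
      have hlie := lie_eq_zero_of_mem_span_one hdefect (rankOne x g)
      rw [add_lie, nsmul_lie, lie_rankOne_rankOne, hs.apply_eq_zero x hx.1, hgz, zero_smul,
        zero_sub, neg_smul, one_smul, neg_neg, ← eq_neg_iff_add_eq_zero] at hlie
      rw [hgz, neg_smul, one_smul, sub_neg_eq_add] at hstep
      rw [iterLie_cons, iterDefect_cons, hiter, lie_rankOne_rankOne, hfx, hgz, hlie]
      refine ⟨by simp, ?_⟩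
      convert hstep using 1
      module

lemma lieDefect_rankOne_rankOne_mem_span_one (h𝒩 : IsNest 𝒩) (hnt : 𝒩 ≠ {⊥, ⊤}) (hm : m ≠ 0)
    (hL : IterLieDeriv (nestAlgebra 𝒩) m L) {f : StrongDual ℂ X} {z x : X}
    (hz : z ∈ nestHull 𝒩 f ⊓ f.ker) (hx : x ∈ nestHull 𝒩 f ⊓ f.ker) {g : StrongDual ℂ X}
    (hxg : x ∈ nestHull 𝒩 g) :
    lieDefect L (rankOne z f) (rankOne x g) ∈ ℂ ∙ (1 : X →L[ℂ] X) := by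
  rcases eq_or_ne f 0 with rfl | hf
  · simp
  rcases eq_or_ne z 0 with rfl | hz0
  · simp
  have hU : nestHull 𝒩 f ⊓ f.ker ≠ ⊥ := (Submodule.ne_bot_iff _).mpr ⟨z, hz, hz0⟩
  have hU𝒩 := fun M hM => h𝒩.nestHull_inf_ker_le_or_ge f (M := M) hM
  obtain ⟨s, hs⟩ := h𝒩.exists_isDefectSymbol hnt hm hL hf hU
  obtain ⟨K, hK, hK0, hchain⟩ := h𝒩.exists_list_iterDefect_add_mem (L := L) hU hU𝒩 m
  obtain ⟨y, hy, hy0⟩ := (Submodule.ne_bot_iff _).mp (inf_ne_bot_of_le_or_ge (hU𝒩 K hK) hU hK0)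
  obtain ⟨y₀, hy₀, l, hl, hlen, hlf⟩ := hchain y hy
  have hsum := (hlf f s inf_le_right hs).2
  rw [hL _ (rankOne_mem_nestAlgebra hy₀.1) l hl hlen, zero_add, ← map_nsmul] at hsum
  have hms := eq_zero_of_rankOne_mem_span_one hy0 (by simp [hs.apply_eq_zero y hy.1]) hsum
  rw [← Nat.cast_smul_eq_nsmul ℂ, smul_eq_zero_iff_right (Nat.cast_ne_zero.mpr hm)] at hms
  simpa [hms] using hs.lieDefect_sub_mem z hz x hx g hxg

lemma exists_lieDefect_rankOne_eq_zero (h𝒩 : IsNest 𝒩) (hnt : 𝒩 ≠ {⊥, ⊤}) (hm : m ≠ 0)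
    (hL : IterLieDeriv (nestAlgebra 𝒩) m L) {U : Submodule ℂ X} (hU : U ≠ ⊥)
    (hU𝒩 : ∀ M ∈ 𝒩, U ≤ M ∨ M ≤ U) :
    ∃ K ∈ 𝒩, K ≠ ⊥ ∧ ∀ f, U ≤ nestHull 𝒩 f ⊓ f.ker → ∀ x ∈ U ⊓ K, ∀ A ∈ nestAlgebra 𝒩,
      lieDefect L (rankOne x f) A = 0 := by
  obtain ⟨K, hK, hK0, hchain⟩ := h𝒩.exists_list_iterDefect_add_mem (L := L) hU hU𝒩 (m - 1)
  refine ⟨K, hK, hK0, fun f hf x hx A hA => ?_⟩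
  obtain ⟨x₀, hx₀, l, hl, hlen, hlf⟩ := hchain x hx
  have hsymbol : IsDefectSymbol 𝒩 L U f 0 := ⟨fun _ _ => rfl, fun z hz x hx g hxg => by
    simpa using h𝒩.lieDefect_rankOne_rankOne_mem_span_one hnt hm hL (hf hz) (hf hx) hxg⟩
  obtain ⟨hiter, hdefect⟩ := hlf f 0 (hf.trans inf_le_right) hsymbol
  rw [map_zero, smul_zero, add_zero] at hdefect
  have := hL _ (rankOne_mem_nestAlgebra (hf hx₀).1) (A :: l)
    (List.forall_mem_cons.mpr ⟨hA, hl⟩) (by rw [List.length_cons, hlen]; omega)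
  rwa [iterDefect_cons, hiter, lie_eq_zero_of_mem_span_one hdefect, zero_add] at this

end IsNest

end SquareZero

section InnerOnRankOne

attribute [local instance] LieRing.ofAssociativeRing

open StrongDual (polarSubmodule mem_polarSubmodule)

variable {X : Type*} [NormedAddCommGroup X] [NormedSpace ℂ X]
  {L : (X →L[ℂ] X) →ₗ[ℂ] (X →L[ℂ] X)}

/-- On the operators `x ⊗ f` with `x ∈ K` and `f` annihilating `N`, the map `L` behaves like the
sum of the inner derivation `[T, ·]` and a map `x ⊗ f ↦ x ⊗ s_f`. -/
structure IsInnerOnRankOne (𝒩 : Set (Submodule ℂ X)) (L : (X →L[ℂ] X) →ₗ[ℂ] (X →L[ℂ] X))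
    (T : X →ₗ[ℂ] X) (K N : Submodule ℂ X) : Prop where
  mem_left : K ∈ 𝒩
  mem_right : N ∈ 𝒩
  ne_bot : K ≠ ⊥
  lieDefect_eq_zero : ∀ x ∈ K, ∀ f ∈ polarSubmodule ℂ N, ∀ A ∈ nestAlgebra 𝒩,
    lieDefect L (rankOne x f) A = 0
  exists_apply_eq : ∀ f ∈ polarSubmodule ℂ N, ∀ v, ∃ c : ℂ, ∀ x ∈ K,
    L (rankOne x f) v = f v • T x + c • x

variable {𝒩 : Set (Submodule ℂ X)} {T : X →ₗ[ℂ] X} {K N : Submodule ℂ X}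

namespace IsInnerOnRankOne

lemma exists_symbol (h : IsInnerOnRankOne 𝒩 L T K N) {f₀ : StrongDual ℂ X}
    (hf₀ : f₀ ∈ polarSubmodule ℂ N) {v₀ : X} (hfv₀ : f₀ v₀ = 1) :
    ∃ s : StrongDual ℂ X → X → ℂ, ∀ A ∈ nestAlgebra 𝒩, ∃ c : ℂ,
      (∀ x ∈ K, innerDefect L T A x = c • x) ∧
      ∀ f ∈ polarSubmodule ℂ N, ∀ v, f (L A v) = c * f v + s (f.comp A) v - s f (A v) := by
  have hs : ∀ f v, ∃ c : ℂ, f ∈ polarSubmodule ℂ N → ∀ x ∈ K,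
      L (rankOne x f) v = f v • T x + c • x := fun f v => by
    by_cases hf : f ∈ polarSubmodule ℂ N
    · exact (h.exists_apply_eq f hf v).imp fun c hc _ => hc
    · exact ⟨0, fun hf' => absurd hf' hf⟩
  choose s hs using hs
  refine ⟨s, fun A hA => ?_⟩
  have key : ∀ f ∈ polarSubmodule ℂ N, ∀ v, ∀ x ∈ K,
      f v • innerDefect L T A x = (f (L A v) + s f (A v) - s (f.comp A) v) • x := by
    intro f hf v x hx
    have hG := DFunLike.congr_fun (h.lieDefect_eq_zero x hx f hf A hA) v
    simp only [lieDefect_apply, Ring.lie_def, mul_rankOne, rankOne_mul, map_sub, sub_apply,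
      mul_apply_eq_comp, rankOne_apply, zero_apply] at hG
    rw [hs f v hf _ (hA K h.mem_left x hx), hs _ v (comp_mem_polarSubmodule h.mem_right hA hf) x hx,
      hs f v hf x hx, hs f (A v) hf x hx] at hG
    simp only [map_add, map_smul, ContinuousLinearMap.comp_apply] at hG
    rw [innerDefect]
    linear_combination (norm := module) hG
  refine ⟨f₀ (L A v₀) + s f₀ (A v₀) - s (f₀.comp A) v₀, fun x hx => ?_, fun f hf v => ?_⟩
  · rw [← key f₀ hf₀ v₀ x hx, hfv₀, one_smul]
  · obtain ⟨x, hx, hx0⟩ := (Submodule.ne_bot_iff _).mp h.ne_bot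
    have hf := key f hf v x hx
    rw [← one_smul ℂ (innerDefect L T A x), ← hfv₀, key f₀ hf₀ v₀ x hx, smul_smul] at hf
    linear_combination -smul_left_injective ℂ hx0 hf

lemma innerDefect_eq_smul (h : IsInnerOnRankOne 𝒩 L T K N) {f₀ : StrongDual ℂ X}
    (hf₀ : f₀ ∈ polarSubmodule ℂ N) {v₀ : X} (hfv₀ : f₀ v₀ = 1) {A : X →L[ℂ] X}
    (hA : A ∈ nestAlgebra 𝒩) {c : ℂ} {x₀ : X} (hx₀K : x₀ ∈ K) (hx₀ : x₀ ≠ 0)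
    (hc : innerDefect L T A x₀ = c • x₀) {x : X} (hx : x ∈ K) : innerDefect L T A x = c • x := by
  obtain ⟨s, hs⟩ := h.exists_symbol hf₀ hfv₀
  obtain ⟨c', hc', -⟩ := hs A hA
  rw [hc' x hx, ← smul_left_injective ℂ hx₀ (hc.symm.trans (hc' x₀ hx₀K))]

lemma apply_derDefect_eq_zero (h : IsInnerOnRankOne 𝒩 L T K N) {f₀ : StrongDual ℂ X}
    (hf₀ : f₀ ∈ polarSubmodule ℂ N) {v₀ : X} (hfv₀ : f₀ v₀ = 1) {φ : (X →L[ℂ] X) →ₗ[ℂ] ℂ}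
    {x₀ : X} (hx₀K : x₀ ∈ K) (hx₀ : x₀ ≠ 0)
    (hφ : ∀ A ∈ nestAlgebra 𝒩, innerDefect L T A x₀ = φ A • x₀) {A B : X →L[ℂ] X}
    (hA : A ∈ nestAlgebra 𝒩) (hB : B ∈ nestAlgebra 𝒩) {f : StrongDual ℂ X}
    (hf : f ∈ polarSubmodule ℂ N) (v : X) : f (derDefect (L - φ.smulRight 1) A B v) = 0 := by
  obtain ⟨s, hs⟩ := h.exists_symbol hf₀ hfv₀
  have hfL : ∀ A ∈ nestAlgebra 𝒩, ∀ f ∈ polarSubmodule ℂ N, ∀ v,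
      f (L A v) = φ A * f v + s (f.comp A) v - s f (A v) := fun A hA => by
    obtain ⟨c, hc, hfc⟩ := hs A hA
    rwa [smul_left_injective ℂ hx₀ ((hφ A hA).symm.trans (hc x₀ hx₀K))]
  have hAB := hfL _ ((nestAlgebra 𝒩).mul_mem hA hB) f hf v
  have hA' := hfL A hA f hf (B v)
  have hB' := hfL B hB _ (comp_mem_polarSubmodule h.mem_right hA hf) v
  rw [show f.comp (A * B) = (f.comp A).comp B from rfl] at hAB
  simp only [derDefect, LinearMap.sub_apply, LinearMap.smulRight_apply, sub_apply, smul_apply,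
    one_apply_eq_self, mul_apply_eq_comp, map_sub, map_smul, smul_eq_mul,
    ContinuousLinearMap.comp_apply] at hAB hA' hB' ⊢
  linear_combination hAB - hA' - hB'

end IsInnerOnRankOne

lemma derDefect_apply_eq_zero (hK : K ∈ 𝒩) {φ : (X →L[ℂ] X) →ₗ[ℂ] ℂ}
    (hφ : ∀ A ∈ nestAlgebra 𝒩, ∀ x ∈ K, innerDefect L T A x = φ A • x) {A B : X →L[ℂ] X}
    (hA : A ∈ nestAlgebra 𝒩) (hB : B ∈ nestAlgebra 𝒩) {x : X} (hx : x ∈ K) :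
    derDefect (L - φ.smulRight 1) A B x = 0 := by
  have hAB := hφ _ ((nestAlgebra 𝒩).mul_mem hA hB) x hx
  have hA' := hφ A hA _ (hB K hK x hx)
  have hB' := congrArg A (hφ B hB x hx)
  simp only [derDefect, innerDefect, LinearMap.sub_apply, LinearMap.smulRight_apply, sub_apply,
    smul_apply, one_apply_eq_self, mul_apply_eq_comp, map_sub, map_add, map_smul]
    at hAB hA' hB' ⊢
  linear_combination (norm := module) hAB - hA' - hB'

end InnerOnRankOne

section ZeroPlusEqBot

open StrongDual (polarSubmodule mem_polarSubmodule)

variable {X : Type*} [NormedAddCommGroup X] [NormedSpace ℂ X] {𝒩 : Set (Submodule ℂ X)}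

/-- The intersection `0₊` of the nonzero members of the nest, its smallest nonzero member unless
it is zero. -/
def zeroPlus (𝒩 : Set (Submodule ℂ X)) : Submodule ℂ X :=
  sInf {M ∈ 𝒩 | M ≠ ⊥}

lemma zeroPlus_le {M : Submodule ℂ X} (hM : M ∈ 𝒩) (hM0 : M ≠ ⊥) : zeroPlus 𝒩 ≤ M :=
  sInf_le ⟨hM, hM0⟩

namespace IsNest

lemma zeroPlus_mem (h𝒩 : IsNest 𝒩) : zeroPlus 𝒩 ∈ 𝒩 :=
  h𝒩.sInf_mem _ (Set.sep_subset _ _)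

lemma exists_le_notMem_of_zeroPlus_eq_bot (h𝒩 : IsNest 𝒩) (h0 : zeroPlus 𝒩 = ⊥)
    {N : Submodule ℂ X} (hN : N ∈ 𝒩) (hN0 : N ≠ ⊥) {x : X} (hx : x ≠ 0) :
    ∃ M ∈ 𝒩, M ≠ ⊥ ∧ M ≤ N ∧ x ∉ M := by
  obtain ⟨M, hM, hM0, hxM⟩ : ∃ M ∈ 𝒩, M ≠ ⊥ ∧ x ∉ M := by
    contrapose! hx
    rw [← Submodule.mem_bot ℂ, ← h0]
    exact Submodule.mem_sInf.mpr fun M hM => hx M hM.1 hM.2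
  exact ⟨M ⊓ N, h𝒩.inf_mem hM hN, inf_ne_bot_of_le_or_ge (h𝒩.total M hM N hN) hM0 hN0,
    inf_le_right, fun h => hxM h.1⟩

lemma exists_biorthogonal_of_zeroPlus_eq_bot (h𝒩 : IsNest 𝒩) (h0 : zeroPlus 𝒩 = ⊥)
    {K₀ : Submodule ℂ X} (hK₀ : K₀ ∈ 𝒩) (hK₀0 : K₀ ≠ ⊥) :
    ∃ K ∈ 𝒩, K ≠ ⊥ ∧ K ≤ K₀ ∧ ∃ z ∈ K₀, ∃ w ∈ K₀, ∃ g ∈ polarSubmodule ℂ K,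
      ∃ p ∈ polarSubmodule ℂ K, g z = 1 ∧ g w = 0 ∧ p z = 0 ∧ p w = 1 := by
  obtain ⟨z, hz, hz0⟩ := (Submodule.ne_bot_iff _).mp hK₀0
  obtain ⟨K₁, hK₁, hK₁0, hK₁₀, hzK₁⟩ := h𝒩.exists_le_notMem_of_zeroPlus_eq_bot h0 hK₀ hK₀0 hz0
  obtain ⟨w, hw, hw0⟩ := (Submodule.ne_bot_iff _).mp hK₁0
  obtain ⟨K, hK, hK0, hKK₁, hwK⟩ := h𝒩.exists_le_notMem_of_zeroPlus_eq_bot h0 hK₁ hK₁0 hw0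
  obtain ⟨g, hg, hgz⟩ := exists_mem_polarSubmodule_eq_one (h𝒩.closed _ hK₁) hzK₁
  obtain ⟨q, hq, hqw⟩ := exists_mem_polarSubmodule_eq_one (h𝒩.closed _ hK) hwK
  have hgw : g w = 0 := (mem_polarSubmodule ℂ K₁ g).mp hg w hw
  have hgK := polarSubmodule_anti hKK₁ hg
  exact ⟨K, hK, hK0, hKK₁.trans hK₁₀, z, hz, w, hK₁₀ hw, g, hgK, q - q z • g,
    Submodule.sub_mem _ hq (Submodule.smul_mem _ _ hgK), hgz, hgw, by simp [hgz],
    by simp [hgw, hqw]⟩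

variable {m : ℕ} {L : (X →L[ℂ] X) →ₗ[ℂ] (X →L[ℂ] X)}

lemma exists_apply_rankOne_mem_span_of_zeroPlus_eq_bot (h𝒩 : IsNest 𝒩) (h0 : zeroPlus 𝒩 = ⊥)
    {K₀ : Submodule ℂ X} (hK₀ : K₀ ∈ 𝒩) (hK₀0 : K₀ ≠ ⊥) :
    ∃ K ∈ 𝒩, K ≠ ⊥ ∧ K ≤ K₀ ∧ ∀ f ∈ polarSubmodule ℂ K₀,
      (∀ x ∈ K₀, ∀ A ∈ nestAlgebra 𝒩, lieDefect L (rankOne x f) A = 0) →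
      ∀ x ∈ K, ∀ v, f v = 0 → L (rankOne x f) v ∈ ℂ ∙ x := by
  obtain ⟨K, hK, hK0, hKK₀, z, hz, w, hw, g, hg, p, hp, hgz, hgw, hpz, hpw⟩ :=
    h𝒩.exists_biorthogonal_of_zeroPlus_eq_bot h0 hK₀ hK₀0
  refine ⟨K, hK, hK0, hKK₀, fun f hf hdefect x hx v hfv => ?_⟩
  rw [mem_polarSubmodule] at hf
  have hmem {y : X} (hy : y ∈ K₀) {h : StrongDual ℂ X} (hh : h ∈ polarSubmodule ℂ K) {u : X}
      (hu : f u = 0) := smul_add_smul_mem_span_pair_of_lieDefect_eq_zero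
    (hf x (hKK₀ hx)) (hdefect y hy _ (rankOne_mem_nestAlgebra (h𝒩.le_nestHull hK hh hx))) hu
  have hzx : L (rankOne z f) x ∈ Submodule.span ℂ {x, z} := by
    simpa [hpz, hpw] using hmem hz hp (hf w hw)
  have hwx : L (rankOne w f) x ∈ Submodule.span ℂ {x, w} := by
    simpa [hgz, hgw] using hmem hw hg (hf z hz)
  have hxz : L (rankOne x f) v ∈ Submodule.span ℂ {x, z} := by
    simpa [hgz] using Submodule.sub_mem _ (hmem hz hg hfv) (Submodule.smul_mem _ (g v) hzx)
  have hxw : L (rankOne x f) v ∈ Submodule.span ℂ {x, w} := by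
    simpa [hpw] using Submodule.sub_mem _ (hmem hw hp hfv) (Submodule.smul_mem _ (p v) hwx)
  obtain ⟨a, b, hab⟩ := Submodule.mem_span_pair.mp hxz
  obtain ⟨a', b', hab'⟩ := Submodule.mem_span_pair.mp hxw
  have hgx : g x = 0 := (mem_polarSubmodule ℂ K g).mp hg x hx
  have hb : b = 0 := by simpa [hgx, hgz, hgw] using congrArg g (hab.trans hab'.symm)
  exact Submodule.mem_span_singleton.mpr ⟨a, by simpa [hb] using hab⟩

lemma exists_isInnerOnRankOne_of_zeroPlus_eq_bot (h𝒩 : IsNest 𝒩) (hnt : 𝒩 ≠ {⊥, ⊤}) (hm : m ≠ 0)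
    (hL : IterLieDeriv (nestAlgebra 𝒩) m L) (h0 : zeroPlus 𝒩 = ⊥) {N : Submodule ℂ X}
    (hN : N ∈ 𝒩) (hN0 : N ≠ ⊥) {f₀ : StrongDual ℂ X} (hf₀ : f₀ ∈ polarSubmodule ℂ N) {v₀ : X}
    (hfv₀ : f₀ v₀ = 1) : ∃ K, IsInnerOnRankOne 𝒩 L (evalRankOne L f₀ v₀) K N := by
  obtain ⟨K₀, hK₀, hK₀0, hdefect⟩ :=
    h𝒩.exists_lieDefect_rankOne_eq_zero hnt hm hL hN0 (h𝒩.total N hN)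
  obtain ⟨K, hK, hK0, hKle, hspan⟩ :=
    h𝒩.exists_apply_rankOne_mem_span_of_zeroPlus_eq_bot (L := L) h0 (h𝒩.inf_mem hN hK₀)
      (inf_ne_bot_of_le_or_ge (h𝒩.total N hN K₀ hK₀) hN0 hK₀0)
  have hdefect' : ∀ f ∈ polarSubmodule ℂ N, ∀ x ∈ N ⊓ K₀, ∀ A ∈ nestAlgebra 𝒩,
      lieDefect L (rankOne x f) A = 0 := fun f hf =>
    hdefect f (le_inf (h𝒩.le_nestHull hN hf) ((mem_polarSubmodule ℂ N f).mp hf))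
  refine ⟨K, hK, hN, hK0, fun x hx f hf => hdefect' f hf x (hKle hx), fun f hf =>
    exists_apply_rankOne_eq_smul_add_smul (fun x hx f hf =>
      hspan f (polarSubmodule_anti inf_le_left hf) (hdefect' f hf) x hx) hf₀ hfv₀ hf⟩

lemma derDefect_eq_zero_of_zeroPlus_eq_bot (h𝒩 : IsNest 𝒩) (hnt : 𝒩 ≠ {⊥, ⊤}) (hm : m ≠ 0)
    (hL : IterLieDeriv (nestAlgebra 𝒩) m L) (h0 : zeroPlus 𝒩 = ⊥) {N K : Submodule ℂ X}
    (hN0 : N ≠ ⊥) {f₀ : StrongDual ℂ X}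
    (hf₀ : f₀ ∈ polarSubmodule ℂ N) {v₀ : X} (hfv₀ : f₀ v₀ = 1)
    (hK : IsInnerOnRankOne 𝒩 L (evalRankOne L f₀ v₀) K N) {φ : (X →L[ℂ] X) →ₗ[ℂ] ℂ}
    {x₀ : X} (hx₀K : x₀ ∈ K) (hx₀ : x₀ ≠ 0)
    (hφ : ∀ A ∈ nestAlgebra 𝒩, innerDefect L (evalRankOne L f₀ v₀) A x₀ = φ A • x₀)
    {A B : X →L[ℂ] X} (hA : A ∈ nestAlgebra 𝒩) (hB : B ∈ nestAlgebra 𝒩) :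
    derDefect (L - φ.smulRight 1) A B = 0 := by
  ext v
  by_contra hv
  obtain ⟨M, hM, hM0, hMN, hvM⟩ :=
    h𝒩.exists_le_notMem_of_zeroPlus_eq_bot h0 hK.mem_right hN0 hv
  have hf₀M := polarSubmodule_anti hMN hf₀
  obtain ⟨K', hK'⟩ :=
    h𝒩.exists_isInnerOnRankOne_of_zeroPlus_eq_bot hnt hm hL h0 hM hM0 hf₀M hfv₀
  obtain ⟨x, ⟨hxK, hxK'⟩, hx⟩ := (Submodule.ne_bot_iff _).mp
    (inf_ne_bot_of_le_or_ge (h𝒩.total K hK.mem_left K' hK'.mem_left) hK.ne_bot hK'.ne_bot)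
  obtain ⟨f, hf, hfv⟩ := exists_mem_polarSubmodule_eq_one (h𝒩.closed M hM) hvM
  have := hK'.apply_derDefect_eq_zero hf₀M hfv₀ hxK' hx
    (fun C hC => hK.innerDefect_eq_smul hf₀ hfv₀ hC hx₀K hx₀ (hφ C hC) hxK) hA hB hf v
  exact one_ne_zero (hfv.symm.trans this)

end IsNest

end ZeroPlusEqBot

section ZeroPlusNeBot

attribute [local instance] LieRing.ofAssociativeRing

open StrongDual (polarSubmodule mem_polarSubmodule)

variable {X : Type*} [NormedAddCommGroup X] [NormedSpace ℂ X] {𝒩 : Set (Submodule ℂ X)}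
  {L D : (X →L[ℂ] X) →ₗ[ℂ] (X →L[ℂ] X)} {T : X →ₗ[ℂ] X}

/-- The Lie defect of `L - φ • 1` vanishes on `K`, hence cannot be a nonzero scalar. -/
lemma lieDefect_sub_smulRight_eq_zero {K : Submodule ℂ X} (hK : K ∈ 𝒩) (hK0 : K ≠ ⊥)
    {φ : (X →L[ℂ] X) →ₗ[ℂ] ℂ}
    (hφ : ∀ A ∈ nestAlgebra 𝒩, ∀ x ∈ K, innerDefect L T A x = φ A • x) {A B : X →L[ℂ] X}
    (hA : A ∈ nestAlgebra 𝒩) (hB : B ∈ nestAlgebra 𝒩)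
    (h : lieDefect L A B ∈ ℂ ∙ (1 : X →L[ℂ] X)) : lieDefect (L - φ.smulRight 1) A B = 0 := by
  obtain ⟨x, hx, hx0⟩ := (Submodule.ne_bot_iff _).mp hK0
  obtain ⟨c, hc⟩ := Submodule.mem_span_singleton.mp h
  have hLie := lieDefect_sub_smulRight L φ A B
  rw [← hc, ← sub_smul] at hLie
  have hcx : (c - φ ⁅A, B⁆) • x = 0 := by
    have := congrArg (· x) hLie
    simpa [lieDefect_eq_derDefect_sub, derDefect_apply_eq_zero hK hφ hA hB hx,
      derDefect_apply_eq_zero hK hφ hB hA hx, eq_comm] using this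
  rw [hLie, (smul_eq_zero.mp hcx).resolve_right hx0, zero_smul]

lemma zeroPlus_le_nestHull (f : StrongDual ℂ X) : zeroPlus 𝒩 ≤ nestHull 𝒩 f := by
  refine fun x hx => mem_nestHull.mpr fun M hM => ?_
  rcases eq_or_ne M ⊥ with rfl | hM0
  · exact Or.inl (by simp [mem_polarSubmodule])
  · exact Or.inr (zeroPlus_le hM hM0 hx)

/-- When `g x = 1`, every `A` is the sum of an operator commuting with `x ⊗ g` and two square-zero
operators of rank one. -/
lemma lieDefect_rankOne_eq_zero_of_apply_eq_one (hK : zeroPlus 𝒩 ∈ 𝒩)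
    (hcomm : ∀ A ∈ nestAlgebra 𝒩, ∀ B ∈ nestAlgebra 𝒩, ⁅A, B⁆ = 0 → lieDefect D A B = 0)
    (hsq : ∀ x ∈ zeroPlus 𝒩, ∀ f, f x = 0 → ∀ A ∈ nestAlgebra 𝒩, lieDefect D (rankOne x f) A = 0)
    {x : X} (hx : x ∈ zeroPlus 𝒩) {g : StrongDual ℂ X} (hgx : g x = 1) {A : X →L[ℂ] X}
    (hA : A ∈ nestAlgebra 𝒩) : lieDefect D (rankOne x g) A = 0 := by
  have hmem : ∀ y ∈ zeroPlus 𝒩, ∀ f, rankOne y f ∈ nestAlgebra 𝒩 := fun y hy f =>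
    rankOne_mem_nestAlgebra (zeroPlus_le_nestHull f hy)
  let k := g.comp A - g (A x) • g
  let z := A x - g (A x) • x
  have hz : z ∈ zeroPlus 𝒩 := Submodule.sub_mem _ (hA _ hK x hx) (Submodule.smul_mem _ _ hx)
  have hk0 : k x = 0 := by simp [k, hgx]
  have hz0 : g z = 0 := by simp [z, hgx]
  have hC : ⁅rankOne x g, A - rankOne x k - rankOne z g⁆ = 0 := by
    rw [lie_sub, lie_sub, lie_rankOne_rankOne, lie_rankOne_rankOne, Ring.lie_def, mul_rankOne,
      rankOne_mul, hgx, hk0, hz0]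
    simp only [k, z, map_sub, map_smul, sub_apply, smul_apply]
    module
  have hCdefect := hcomm _ (hmem x hx g) _
    (Subalgebra.sub_mem _ (Subalgebra.sub_mem _ hA (hmem x hx k)) (hmem z hz g)) hC
  rwa [map_sub, map_sub, ← lieDefect_skew D _ (rankOne x k), ← lieDefect_skew D _ (rankOne z g),
    hsq x hx k hk0 _ (hmem x hx g), hsq z hz g hz0 _ (hmem x hx g), neg_zero, sub_zero,
    sub_zero] at hCdefect

lemma lieDefect_rankOne_eq_zero_of_mem_zeroPlus (hK : zeroPlus 𝒩 ∈ 𝒩)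
    (hcomm : ∀ A ∈ nestAlgebra 𝒩, ∀ B ∈ nestAlgebra 𝒩, ⁅A, B⁆ = 0 → lieDefect D A B = 0)
    (hsq : ∀ x ∈ zeroPlus 𝒩, ∀ f, f x = 0 → ∀ A ∈ nestAlgebra 𝒩, lieDefect D (rankOne x f) A = 0)
    {x : X} (hx : x ∈ zeroPlus 𝒩) (g : StrongDual ℂ X) {A : X →L[ℂ] X}
    (hA : A ∈ nestAlgebra 𝒩) : lieDefect D (rankOne x g) A = 0 := by
  rcases eq_or_ne x 0 with rfl | hx0
  · simp
  obtain ⟨g₁, hg₁⟩ := SeparatingDual.exists_eq_one (R := ℂ) hx0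
  rw [← sub_add_cancel g (g x • g₁), map_add, map_add, LinearMap.add_apply,
    hsq x hx _ (by simp [hg₁]) A hA, map_smul, map_smul, LinearMap.smul_apply,
    lieDefect_rankOne_eq_zero_of_apply_eq_one hK hcomm hsq hx hg₁ hA, smul_zero, add_zero]

lemma isInnerOnRankOne_zeroPlus_bot (hbot : ⊥ ∈ 𝒩) (hK : zeroPlus 𝒩 ∈ 𝒩) (h0 : zeroPlus 𝒩 ≠ ⊥)
    (hcomm : ∀ A ∈ nestAlgebra 𝒩, ∀ B ∈ nestAlgebra 𝒩, ⁅A, B⁆ = 0 → lieDefect D A B = 0)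
    (hsq : ∀ x ∈ zeroPlus 𝒩, ∀ f, f x = 0 → ∀ A ∈ nestAlgebra 𝒩, lieDefect D (rankOne x f) A = 0)
    (hT : ∀ A ∈ nestAlgebra 𝒩, ∀ x ∈ zeroPlus 𝒩, innerDefect D T A x = 0) :
    IsInnerOnRankOne 𝒩 D T (zeroPlus 𝒩) ⊥ := by
  refine ⟨hK, hbot, h0, fun x hx f _ A hA =>
    lieDefect_rankOne_eq_zero_of_mem_zeroPlus hK hcomm hsq hx f hA, fun f _ v => ?_⟩
  have hmem (x : zeroPlus 𝒩) (g : StrongDual ℂ X) : rankOne (x : X) g ∈ nestAlgebra 𝒩 :=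
    rankOne_mem_nestAlgebra (zeroPlus_le_nestHull g x.2)
  have hspan (x : zeroPlus 𝒩) {g : StrongDual ℂ X} (hgx : g x = 1) :
      D (rankOne (x : X) g) v - g v • T x ∈ ℂ ∙ (x : X) :=
    apply_rankOne_sub_smul_mem_span hgx (fun f => hT _ (hmem x f) x x.2)
      (fun h hhx => hsq x x.2 h hhx _ (hmem x g)) v
  obtain ⟨c, hc⟩ := exists_eq_smul_of_forall_mem_span
    ((evalRankOne D f v - f v • T) ∘ₗ (zeroPlus 𝒩).subtype) fun x => by
      rcases eq_or_ne (x : X) 0 with hx0 | hx0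
      · simp [hx0]
      obtain ⟨g, hgx⟩ := SeparatingDual.exists_eq_one (R := ℂ) hx0
      have hfg := Submodule.sub_mem _ (hspan x (g := f + (1 - f x) • g) (by simp [hgx]))
        (Submodule.smul_mem _ (1 - f x) (hspan x hgx))
      convert hfg using 1
      simp only [LinearMap.comp_apply, LinearMap.sub_apply, LinearMap.smul_apply,
        Submodule.subtype_apply, evalRankOne_apply, map_add, map_smul, add_apply, smul_apply]
      module
  exact ⟨c, fun x hx => by simpa [sub_eq_iff_eq_add'] using hc ⟨x, hx⟩⟩

namespace IsNest

variable {m : ℕ}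

lemma lieDefect_rankOne_eq_zero_of_apply_eq_zero (h𝒩 : IsNest 𝒩) (hnt : 𝒩 ≠ {⊥, ⊤}) (hm : m ≠ 0)
    (hL : IterLieDeriv (nestAlgebra 𝒩) m L) {x : X} (hx : x ∈ zeroPlus 𝒩) {f : StrongDual ℂ X}
    (hfx : f x = 0) {A : X →L[ℂ] X} (hA : A ∈ nestAlgebra 𝒩) :
    lieDefect L (rankOne x f) A = 0 := by
  rcases eq_or_ne x 0 with rfl | hx0
  · simp
  have hxU : x ∈ nestHull 𝒩 f ⊓ f.ker := ⟨zeroPlus_le_nestHull f hx, hfx⟩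
  obtain ⟨K, hK, hK0, h⟩ := h𝒩.exists_lieDefect_rankOne_eq_zero hnt hm hL
    ((Submodule.ne_bot_iff _).mpr ⟨x, hxU, hx0⟩) fun M hM => h𝒩.nestHull_inf_ker_le_or_ge f hM
  exact h f le_rfl x ⟨hxU, zeroPlus_le hK hK0 hx⟩ A hA

lemma isInnerOnRankOne_zeroPlus (h𝒩 : IsNest 𝒩) (hnt : 𝒩 ≠ {⊥, ⊤}) (hm : m ≠ 0)
    (hL : IterLieDeriv (nestAlgebra 𝒩) m L) (h0 : zeroPlus 𝒩 ≠ ⊥) {f₀ : StrongDual ℂ X}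
    (hf₀ : f₀ ∈ polarSubmodule ℂ (zeroPlus 𝒩)) {v₀ : X} (hfv₀ : f₀ v₀ = 1) :
    IsInnerOnRankOne 𝒩 L (evalRankOne L f₀ v₀) (zeroPlus 𝒩) (zeroPlus 𝒩) := by
  have hdefect : ∀ x ∈ zeroPlus 𝒩, ∀ f ∈ polarSubmodule ℂ (zeroPlus 𝒩), ∀ A ∈ nestAlgebra 𝒩,
      lieDefect L (rankOne x f) A = 0 := fun x hx f hf A hA =>
    h𝒩.lieDefect_rankOne_eq_zero_of_apply_eq_zero hnt hm hL hx
      ((mem_polarSubmodule ℂ _ f).mp hf x hx) hA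
  refine ⟨h𝒩.zeroPlus_mem, h𝒩.zeroPlus_mem, h0, hdefect, fun f hf =>
    exists_apply_rankOne_eq_smul_add_smul (fun x hx f hf v hfv => ?_) hf₀ hfv₀ hf⟩
  have hfx : f x = 0 := (mem_polarSubmodule ℂ _ f).mp hf x hx
  rcases eq_or_ne x 0 with rfl | hx0
  · simp
  obtain ⟨g, hgx⟩ := SeparatingDual.exists_eq_one (R := ℂ) hx0
  have hmem {u : X} (hu : f u = 0) : L (rankOne x f) u + g u • L (rankOne x f) x ∈ ℂ ∙ x := by
    simpa [hgx] using smul_add_smul_mem_span_pair_of_lieDefect_eq_zero hfx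
      (hdefect x hx f hf _ (rankOne_mem_nestAlgebra (zeroPlus_le_nestHull g hx))) hu
  have hLx : L (rankOne x f) x ∈ ℂ ∙ x := by
    have := Submodule.smul_mem _ (2⁻¹ : ℂ) (hmem hfx)
    rwa [hgx, one_smul, ← two_smul ℂ, inv_smul_smul₀ two_ne_zero] at this
  exact (Submodule.add_mem_iff_left _ (Submodule.smul_mem _ _ hLx)).mp (hmem hfv)

lemma derDefect_eq_zero_of_zeroPlus_ne_bot (h𝒩 : IsNest 𝒩) (hnt : 𝒩 ≠ {⊥, ⊤}) (hm : m ≠ 0)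
    (hL : IterLieDeriv (nestAlgebra 𝒩) m L) (h0 : zeroPlus 𝒩 ≠ ⊥) {f₀ : StrongDual ℂ X}
    (hf₀ : f₀ ∈ polarSubmodule ℂ (zeroPlus 𝒩)) {v₀ : X} (hfv₀ : f₀ v₀ = 1)
    {φ : (X →L[ℂ] X) →ₗ[ℂ] ℂ} {x₀ : X} (hx₀K : x₀ ∈ zeroPlus 𝒩) (hx₀ : x₀ ≠ 0)
    (hφ : ∀ A ∈ nestAlgebra 𝒩, innerDefect L (evalRankOne L f₀ v₀) A x₀ = φ A • x₀)
    {A B : X →L[ℂ] X} (hA : A ∈ nestAlgebra 𝒩) (hB : B ∈ nestAlgebra 𝒩) :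
    derDefect (L - φ.smulRight 1) A B = 0 := by
  have hφ' : ∀ A ∈ nestAlgebra 𝒩, ∀ x ∈ zeroPlus 𝒩,
      innerDefect L (evalRankOne L f₀ v₀) A x = φ A • x := fun A hA x hx =>
    (h𝒩.isInnerOnRankOne_zeroPlus hnt hm hL h0 hf₀ hfv₀).innerDefect_eq_smul hf₀ hfv₀ hA hx₀K hx₀
      (hφ A hA) hx
  have hzero {A B : X →L[ℂ] X} (hA : A ∈ nestAlgebra 𝒩) (hB : B ∈ nestAlgebra 𝒩) :=
    lieDefect_sub_smulRight_eq_zero h𝒩.zeroPlus_mem h0 hφ' hA hB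
  have hT : ∀ A ∈ nestAlgebra 𝒩, ∀ x ∈ zeroPlus 𝒩,
      innerDefect (L - φ.smulRight 1) (evalRankOne L f₀ v₀) A x = 0 := fun A hA x hx => by
    rw [innerDefect_sub_smulRight, hφ' A hA x hx, sub_self]
  have hD := isInnerOnRankOne_zeroPlus_bot h𝒩.bot_mem h𝒩.zeroPlus_mem h0
    (fun A hA B hB hAB => hzero hA hB (h𝒩.lieDefect_mem_span_one hnt hm hL hA hB hAB))
    (fun x hx f hfx A hA => hzero (rankOne_mem_nestAlgebra (zeroPlus_le_nestHull f hx)) hA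
      (h𝒩.lieDefect_rankOne_eq_zero_of_apply_eq_zero hnt hm hL hx hfx hA ▸ Submodule.zero_mem _)) hT
  ext v
  refine SeparatingDual.eq_zero_of_forall_dual_eq_zero (R := ℂ) fun f => ?_
  simpa using hD.apply_derDefect_eq_zero (φ := 0) (f := f) (polarSubmodule_anti bot_le hf₀) hfv₀
    hx₀K hx₀ (fun A hA => by rw [hT A hA x₀ hx₀K, LinearMap.zero_apply, zero_smul]) hA hB
    (by simp [mem_polarSubmodule]) v

end IsNest

end ZeroPlusNeBot

section CommPoly

attribute [local instance] LieRing.ofAssociativeRing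

variable {B : Type*} [Ring B]

lemma commPoly_succ_succ (n : ℕ) (a : Fin (n + 2) → B) :
    commPoly (n + 2) a = ⁅commPoly (n + 1) (fun i => a i.castSucc), a (Fin.last (n + 1))⁆ := rfl

lemma sum_commPoly_update (n : ℕ) (a d : Fin (n + 2) → B) :
    ∑ k, commPoly (n + 2) (Function.update a k (d k)) =
      ⁅∑ k, commPoly (n + 1) (Function.update (fun i => a i.castSucc) k (d k.castSucc)),
        a (Fin.last (n + 1))⁆ +
      ⁅commPoly (n + 1) (fun i => a i.castSucc), d (Fin.last (n + 1))⁆ := by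
  have hlast (y : B) : (fun i : Fin (n + 1) =>
      Function.update a (Fin.last (n + 1)) y i.castSucc) = fun i => a i.castSucc :=
    funext fun i => Function.update_of_ne (Fin.castSucc_lt_last i).ne y a
  have hcastSucc (k : Fin (n + 1)) (y : B) : (fun i : Fin (n + 1) =>
      Function.update a k.castSucc y i.castSucc) = Function.update (fun i => a i.castSucc) k y :=
    Function.update_comp_eq_of_injective a (Fin.castSucc_injective (n + 1)) k y
  simp only [Fin.sum_univ_castSucc (n := n + 1), commPoly_succ_succ, hlast, hcastSucc,
    Function.update_self, Function.update_of_ne (Fin.castSucc_lt_last _).ne', Ring.lie_def,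
    Finset.sum_mul, Finset.mul_sum, Finset.sum_sub_distrib]

lemma sum_commPoly_update_add (n : ℕ) (a d e : Fin n → B) :
    ∑ k, commPoly n (Function.update a k (d k + e k)) =
      ∑ k, commPoly n (Function.update a k (d k)) +
        ∑ k, commPoly n (Function.update a k (e k)) := by
  induction n with
  | zero => simp
  | succ n ih =>
    cases n with
    | zero => simp [commPoly]
    | succ n =>
      rw [sum_commPoly_update n a d, sum_commPoly_update n a e,
        sum_commPoly_update n a fun k => d k + e k, ih, add_lie, lie_add]
      abel

lemma sum_commPoly_update_eq_zero {R : Type*} [CommRing R] [Algebra R B] {n : ℕ} (hn : 2 ≤ n)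
    (a : Fin n → B) {d : Fin n → B} (hd : ∀ k, d k ∈ R ∙ (1 : B)) :
    ∑ k, commPoly n (Function.update a k (d k)) = 0 := by
  have lie_d (k : Fin n) (b : B) : ⁅b, d k⁆ = 0 := by
    rw [← lie_skew, lie_eq_zero_of_mem_span_one (hd k), neg_zero]
  obtain ⟨n, rfl⟩ := Nat.exists_eq_add_of_le' hn
  induction n with
  | zero =>
    rw [sum_commPoly_update, lie_d, add_zero]
    simp [commPoly, lie_eq_zero_of_mem_span_one (hd _)]
  | succ n ih =>
    rw [sum_commPoly_update, lie_d, add_zero,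
      ih (by omega) _ (fun k => hd k.castSucc) fun k => lie_d k.castSucc, zero_lie]

variable [Algebra ℂ B] {𝒜 : Subalgebra ℂ B}

lemma coe_commPoly (n : ℕ) (a : Fin n → 𝒜) :
    ((commPoly n a : 𝒜) : B) = commPoly n (fun i => (a i : B)) := by
  induction n with
  | zero => rfl
  | succ n ih =>
    cases n with
    | zero => rfl
    | succ n =>
      rw [commPoly_succ_succ (B := B), ← ih]
      rfl

lemma IsDerivOn.isLieNDeriv {D : 𝒜 →ₗ[ℂ] B} (hD : IsDerivOn 𝒜 D) (n : ℕ) :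
    IsLieNDeriv 𝒜 n D := by
  intro a
  induction n with
  | zero => simp [commPoly]
  | succ n ih =>
    cases n with
    | zero => simp [commPoly]
    | succ n =>
      rw [sum_commPoly_update n (fun i => (a i : B)) fun k => D (a k), ← ih, ← coe_commPoly,
        commPoly_succ_succ, Ring.lie_def, map_sub, hD, hD, Ring.lie_def, Ring.lie_def]
      abel

lemma isLieNDeriv_add_iff {n : ℕ} (hn : 2 ≤ n) {D H : 𝒜 →ₗ[ℂ] B} (hD : IsDerivOn 𝒜 D)
    (hH : ∀ a, H a ∈ ℂ ∙ (1 : B)) :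
    IsLieNDeriv 𝒜 n (D + H) ↔ ∀ a : Fin n → 𝒜, H (commPoly n a) = 0 := by
  refine forall_congr' fun a => ?_
  simp only [LinearMap.add_apply]
  rw [sum_commPoly_update_add, sum_commPoly_update_eq_zero hn _ fun k => hH (a k), add_zero,
    hD.isLieNDeriv n a, add_eq_left]

lemma exists_commPoly_eq_iterLie (L : B →ₗ[ℂ] B) {a : B} (ha : a ∈ 𝒜) {l : List B}
    (hl : ∀ b ∈ l, b ∈ 𝒜) :
    ∃ t : Fin (l.length + 1) → 𝒜,
      commPoly (l.length + 1) (fun i => (t i : B)) = iterLie a l ∧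
      L (iterLie a l) - ∑ k, commPoly (l.length + 1)
        (Function.update (fun i => (t i : B)) k (L (t k))) = iterDefect L a l := by
  induction l with
  | nil => exact ⟨fun _ => ⟨a, ha⟩, rfl, by simp [commPoly]⟩
  | cons b l ih =>
    rw [List.forall_mem_cons] at hl
    obtain ⟨t, hcomm, hdefect⟩ := ih hl.2
    let t' : Fin (l.length + 2) → 𝒜 := Fin.snoc (α := fun _ => 𝒜) t ⟨b, hl.1⟩
    have hcast (i : Fin (l.length + 1)) : t' i.castSucc = t i := Fin.snoc_castSucc _ _ _
    have hlast : t' (Fin.last (l.length + 1)) = ⟨b, hl.1⟩ := Fin.snoc_last _ _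
    have hsum := sum_commPoly_update l.length (fun i => (t' i : B)) fun k => L (t' k)
    simp only [hcast, hlast, hcomm] at hsum
    refine ⟨t', (commPoly_succ_succ _ _).trans ?_, (congrArg _ hsum).trans ?_⟩
    · simp only [hcast, hlast, hcomm, iterLie_cons]
    · rw [iterDefect_cons, ← hdefect, sub_lie, iterLie_cons, lieDefect_apply]
      abel

lemma IsLieNDeriv.iterLieDeriv {m : ℕ} {L : 𝒜 →ₗ[ℂ] B} (h : IsLieNDeriv 𝒜 (m + 1) L)
    {L' : B →ₗ[ℂ] B} (hL' : ∀ a : 𝒜, L' a = L a) : IterLieDeriv 𝒜 m L' := by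
  rintro a ha l hl rfl
  obtain ⟨t, hcomm, hdefect⟩ := exists_commPoly_eq_iterLie L' ha hl
  rw [← hdefect, ← hcomm, ← coe_commPoly, hL', h t, sub_eq_zero]
  simp only [hL']

end CommPoly

section Decomposition

open StrongDual (polarSubmodule)

variable {X : Type*} [NormedAddCommGroup X] [NormedSpace ℂ X] {𝒩 : Set (Submodule ℂ X)}

namespace IsNest

lemma exists_isInnerOnRankOne (h𝒩 : IsNest 𝒩) (hnt : 𝒩 ≠ {⊥, ⊤}) {m : ℕ} (hm : m ≠ 0)
    {L : (X →L[ℂ] X) →ₗ[ℂ] (X →L[ℂ] X)} (hL : IterLieDeriv (nestAlgebra 𝒩) m L) :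
    ∃ K N f₀ v₀, N ≠ ⊥ ∧ f₀ ∈ polarSubmodule ℂ N ∧ f₀ v₀ = 1 ∧
      IsInnerOnRankOne 𝒩 L (evalRankOne L f₀ v₀) K N ∧
      ∀ φ : (X →L[ℂ] X) →ₗ[ℂ] ℂ, ∀ x₀ ∈ K, x₀ ≠ 0 →
        (∀ A ∈ nestAlgebra 𝒩, innerDefect L (evalRankOne L f₀ v₀) A x₀ = φ A • x₀) →
        ∀ A ∈ nestAlgebra 𝒩, ∀ B ∈ nestAlgebra 𝒩, derDefect (L - φ.smulRight 1) A B = 0 := by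
  obtain ⟨N, hN, hN0, hN1⟩ := h𝒩.exists_ne_bot_ne_top hnt
  obtain ⟨v₀, hv₀⟩ := SetLike.exists_not_mem_of_ne_top N hN1
  obtain ⟨f₀, hf₀, hfv₀⟩ := exists_mem_polarSubmodule_eq_one (h𝒩.closed N hN) hv₀
  by_cases h0 : zeroPlus 𝒩 = ⊥
  · obtain ⟨K, hK⟩ :=
      h𝒩.exists_isInnerOnRankOne_of_zeroPlus_eq_bot hnt hm hL h0 hN hN0 hf₀ hfv₀
    exact ⟨K, N, f₀, v₀, hN0, hf₀, hfv₀, hK, fun φ x₀ hx₀K hx₀ hφ A hA B hB =>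
      h𝒩.derDefect_eq_zero_of_zeroPlus_eq_bot hnt hm hL h0 hN0 hf₀ hfv₀ hK hx₀K hx₀ hφ hA hB⟩
  · have hf₀' := polarSubmodule_anti (zeroPlus_le hN hN0) hf₀
    exact ⟨_, _, f₀, v₀, h0, hf₀', hfv₀,
      h𝒩.isInnerOnRankOne_zeroPlus hnt hm hL h0 hf₀' hfv₀, fun φ x₀ hx₀K hx₀ hφ A hA B hB =>
        h𝒩.derDefect_eq_zero_of_zeroPlus_ne_bot hnt hm hL h0 hf₀' hfv₀ hx₀K hx₀ hφ hA hB⟩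

lemma exists_derDefect_eq_zero (h𝒩 : IsNest 𝒩) (hnt : 𝒩 ≠ {⊥, ⊤}) {m : ℕ} (hm : m ≠ 0)
    {L : (X →L[ℂ] X) →ₗ[ℂ] (X →L[ℂ] X)} (hL : IterLieDeriv (nestAlgebra 𝒩) m L) :
    ∃ x₀ f₀ v₀, ∃ k₀ : StrongDual ℂ X, rankOne x₀ f₀ ∈ nestAlgebra 𝒩 ∧
      ∀ φ : (X →L[ℂ] X) →ₗ[ℂ] ℂ, (∀ A, φ A = k₀ (innerDefect L (evalRankOne L f₀ v₀) A x₀)) →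
        ∀ A ∈ nestAlgebra 𝒩, ∀ B ∈ nestAlgebra 𝒩, derDefect (L - φ.smulRight 1) A B = 0 := by
  obtain ⟨K, N, f₀, v₀, hN0, hf₀, hfv₀, hK, hder⟩ := h𝒩.exists_isInnerOnRankOne hnt hm hL
  obtain ⟨x₀, ⟨hx₀K, hx₀N⟩, hx₀⟩ := (Submodule.ne_bot_iff _).mp
    (inf_ne_bot_of_le_or_ge (h𝒩.total K hK.mem_left N hK.mem_right) hK.ne_bot hN0)
  obtain ⟨k₀, hk₀⟩ := SeparatingDual.exists_eq_one (R := ℂ) hx₀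
  obtain ⟨s, hs⟩ := hK.exists_symbol hf₀ hfv₀
  refine ⟨x₀, f₀, v₀, k₀, rankOne_mem_nestAlgebra (h𝒩.le_nestHull hK.mem_right hf₀ hx₀N),
    fun φ hφ => hder φ x₀ hx₀K hx₀ fun A hA => ?_⟩
  obtain ⟨c, hc, -⟩ := hs A hA
  rw [hφ, hc x₀ hx₀K, map_smul, hk₀, smul_eq_mul, mul_one]

lemma exists_isDerivOn_sub_smulRight (h𝒩 : IsNest 𝒩) (hnt : 𝒩 ≠ {⊥, ⊤}) {n : ℕ} (hn : 2 ≤ n)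
    {L : nestAlgebra 𝒩 →ₗ[ℂ] (X →L[ℂ] X)} (hL : IsLieNDeriv (nestAlgebra 𝒩) n L) :
    ∃ φ : nestAlgebra 𝒩 →ₗ[ℂ] ℂ, IsDerivOn (nestAlgebra 𝒩) (L - φ.smulRight 1) ∧
      (Continuous L → Continuous φ) := by
  obtain ⟨m, rfl⟩ := Nat.exists_eq_add_of_le' hn
  obtain ⟨L', hL'⟩ := LinearMap.exists_extend (p := Subalgebra.toSubmodule (nestAlgebra 𝒩)) L
  replace hL' (A : nestAlgebra 𝒩) : L' A = L A := LinearMap.congr_fun hL' A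
  obtain ⟨x₀, f₀, v₀, k₀, hx₀f₀, hder⟩ :=
    h𝒩.exists_derDefect_eq_zero hnt m.succ_ne_zero (hL.iterLieDeriv hL')
  let φ : (X →L[ℂ] X) →ₗ[ℂ] ℂ :=
    { toFun A := k₀ (innerDefect L' (evalRankOne L' f₀ v₀) A x₀)
      map_add' A B := by
        simp only [innerDefect, map_add, map_sub, add_apply]; ring
      map_smul' c A := by
        simp only [innerDefect, map_add, map_sub, map_smul, smul_apply, RingHom.id_apply,
          smul_eq_mul]; ring }
  refine ⟨φ ∘ₗ (nestAlgebra 𝒩).val.toLinearMap, fun A B => ?_, fun hcont => ?_⟩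
  · have := hder φ (fun _ => rfl) A A.2 B B.2
    simp only [derDefect, LinearMap.sub_apply, ← MulMemClass.coe_mul, hL'] at this
    rwa [sub_sub, sub_eq_zero] at this
  · let R : nestAlgebra 𝒩 := ⟨rankOne x₀ f₀, hx₀f₀⟩
    have hφ (A : nestAlgebra 𝒩) : φ A = k₀ (L A x₀ - L (A * R) v₀ + (A : X →L[ℂ] X) (L R v₀)) := by
      rw [← hL', ← hL', ← hL', MulMemClass.coe_mul, mul_rankOne]
      rfl
    change Continuous fun A : nestAlgebra 𝒩 => φ A
    simp only [hφ]
    fun_prop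

end IsNest

end Decomposition

theorem statement0_general {X : Type*} [NormedAddCommGroup X] [NormedSpace ℂ X]
    (𝒩 : Set (Submodule ℂ X)) (hnest : IsNest 𝒩)
    (hnontrivial : 𝒩 ≠ ({⊥, ⊤} : Set (Submodule ℂ X)))
    (n : ℕ) (hn : 2 ≤ n)
    (L : ↥(nestAlgebra 𝒩) →ₗ[ℂ] (X →L[ℂ] X)) :
    (IsLieNDeriv (nestAlgebra 𝒩) n L ↔
      ∃ D H : ↥(nestAlgebra 𝒩) →ₗ[ℂ] (X →L[ℂ] X),
        IsDerivOn (nestAlgebra 𝒩) D ∧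
        (∀ a : ↥(nestAlgebra 𝒩), ∃ c : ℂ, H a = c • (1 : X →L[ℂ] X)) ∧
        (∀ a : Fin n → ↥(nestAlgebra 𝒩), H (commPoly n a) = 0) ∧
        L = D + H) ∧
    (IsLieNDeriv (nestAlgebra 𝒩) n L → Continuous L →
      ∃ D H : ↥(nestAlgebra 𝒩) →ₗ[ℂ] (X →L[ℂ] X),
        IsDerivOn (nestAlgebra 𝒩) D ∧
        (∀ a : ↥(nestAlgebra 𝒩), ∃ c : ℂ, H a = c • (1 : X →L[ℂ] X)) ∧
        (∀ a : Fin n → ↥(nestAlgebra 𝒩), H (commPoly n a) = 0) ∧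
        L = D + H ∧ Continuous D ∧ Continuous H) := by
  have scalar (φ : nestAlgebra 𝒩 →ₗ[ℂ] ℂ) (a) : φ.smulRight (1 : X →L[ℂ] X) a ∈ ℂ ∙ 1 :=
    Submodule.mem_span_singleton.mpr ⟨φ a, rfl⟩
  have decomposition (hL : IsLieNDeriv (nestAlgebra 𝒩) n L) :
      ∃ φ : nestAlgebra 𝒩 →ₗ[ℂ] ℂ, IsDerivOn (nestAlgebra 𝒩) (L - φ.smulRight 1) ∧
        (∀ a : Fin n → nestAlgebra 𝒩, φ.smulRight (1 : X →L[ℂ] X) (commPoly n a) = 0) ∧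
        (Continuous L → Continuous φ) := by
    obtain ⟨φ, hD, hφ⟩ := hnest.exists_isDerivOn_sub_smulRight hnontrivial hn hL
    exact ⟨φ, hD, (isLieNDeriv_add_iff hn hD (scalar φ)).mp (by rwa [sub_add_cancel]), hφ⟩
  refine ⟨⟨fun hL => ?_, ?_⟩, fun hL hcont => ?_⟩
  · obtain ⟨φ, hD, hφ0, -⟩ := decomposition hL
    exact ⟨_, φ.smulRight 1, hD, fun a => ⟨φ a, rfl⟩, hφ0, (sub_add_cancel L _).symm⟩
  · rintro ⟨D, H, hD, hH, hH0, rfl⟩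
    exact (isLieNDeriv_add_iff hn hD fun a =>
      Submodule.mem_span_singleton.mpr ((hH a).imp fun _ => Eq.symm)).mpr hH0
  · obtain ⟨φ, hD, hφ0, hφ⟩ := decomposition hL
    have hH : Continuous (φ.smulRight (1 : X →L[ℂ] X)) := (hφ hcont).smul continuous_const
    exact ⟨_, φ.smulRight 1, hD, fun a => ⟨φ a, rfl⟩, hφ0, (sub_add_cancel L _).symm,
      hcont.sub hH, hH⟩

/-- Let `X` be a complex Banach space, `𝒩` a non-trivial nest on `X`,
and `n ≥ 2`. A linear map `L : Alg 𝒩 → B(X)` is a Lie `n`-derivation if and only if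
there exist a derivation `D : Alg 𝒩 → B(X)` and a linear map `H : Alg 𝒩 → ℂI` vanishing
on every `(n-1)`-th commutator such that `L = D + H`; moreover, if `L` is continuous
then `D` and `H` can be chosen continuous. -/
theorem statement0 {X : Type*} [NormedAddCommGroup X] [NormedSpace ℂ X] [CompleteSpace X]
    (𝒩 : Set (Submodule ℂ X)) (hnest : IsNest 𝒩)
    (hnontrivial : 𝒩 ≠ ({⊥, ⊤} : Set (Submodule ℂ X)))
    (n : ℕ) (hn : 2 ≤ n)
    (L : ↥(nestAlgebra 𝒩) →ₗ[ℂ] (X →L[ℂ] X)) :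
    (IsLieNDeriv (nestAlgebra 𝒩) n L ↔
      ∃ D H : ↥(nestAlgebra 𝒩) →ₗ[ℂ] (X →L[ℂ] X),
        IsDerivOn (nestAlgebra 𝒩) D ∧
        (∀ a : ↥(nestAlgebra 𝒩), ∃ c : ℂ, H a = c • (1 : X →L[ℂ] X)) ∧
        (∀ a : Fin n → ↥(nestAlgebra 𝒩), H (commPoly n a) = 0) ∧
        L = D + H) ∧
    (IsLieNDeriv (nestAlgebra 𝒩) n L → Continuous L →
      ∃ D H : ↥(nestAlgebra 𝒩) →ₗ[ℂ] (X →L[ℂ] X),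
        IsDerivOn (nestAlgebra 𝒩) D ∧
        (∀ a : ↥(nestAlgebra 𝒩), ∃ c : ℂ, H a = c • (1 : X →L[ℂ] X)) ∧
        (∀ a : Fin n → ↥(nestAlgebra 𝒩), H (commPoly n a) = 0) ∧
        L = D + H ∧ Continuous D ∧ Continuous H) :=
  statement0_general 𝒩 hnest hnontrivial n hn L
end
end

section
/- Let X be a complex Banach space with dim X > 2, let 𝒩 be a non-trivial nest on X, and let 𝒜 be a subalgebra of Alg 𝒩 satisfying (♠1)–(♠6) with dim X_-^⊥(𝒜) > 1. Then for every n ≥ 2 and every Lie n-derivation L : 𝒜 → B(X) there exist a derivation D : 𝒜 → B(X) and a linear map H : 𝒜 → ℂI vanishing on every (n−1)-th commutator p_n(A_1,…,A_n) with A_1,…,A_n ∈ 𝒜 such that L = D + H; moreover, if L is continuous then D and H can be chosen continuous. -/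
open scoped Classical

set_option synthInstance.maxHeartbeats 1000000
set_option maxHeartbeats 1000000

noncomputable section

/-- `X₋` : the norm-closed linear span of the union of all members of `𝒩` different
from `X`. -/
def nestXminus {X : Type*} [NormedAddCommGroup X] [NormedSpace ℂ X]
    (𝒩 : Set (Submodule ℂ X)) : Submodule ℂ X :=
  (sSup {N | N ∈ 𝒩 ∧ N ≠ (⊤ : Submodule ℂ X)}).topologicalClosure

/-- The annihilator of a subspace `S` of `X` inside the continuous dual `X*`. -/
def annihilatorOf {X : Type*} [NormedAddCommGroup X] [NormedSpace ℂ X]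
    (S : Submodule ℂ X) : Submodule ℂ (X →L[ℂ] ℂ) where
  carrier := {f | ∀ x ∈ S, f x = 0}
  add_mem' := fun {f g} hf hg x hx => by simp [hf x hx, hg x hx]
  zero_mem' := fun x _ => by simp
  smul_mem' := fun c f hf x hx => by simp [hf x hx]

/-- `X(𝒜)` : the set of `x ∈ X` such that `x ⊗ f ∈ 𝒜` for some nonzero `f ∈ X*`.
Here `x ⊗ f` is the rank-one operator `y ↦ f(y) x`, i.e. `f.smulRight x`. -/
def XofA {X : Type*} [NormedAddCommGroup X] [NormedSpace ℂ X]
    (𝒜 : NonUnitalSubalgebra ℂ (X →L[ℂ] X)) : Set X :=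
  {x | ∃ f : X →L[ℂ] ℂ, f ≠ 0 ∧ f.smulRight x ∈ 𝒜}

/-- `X₋^⊥(𝒜)` : the set of `f ∈ X₋^⊥` such that `x ⊗ f ∈ 𝒜` for some nonzero
`x ∈ X`. -/
def XannA {X : Type*} [NormedAddCommGroup X] [NormedSpace ℂ X]
    (𝒩 : Set (Submodule ℂ X)) (𝒜 : NonUnitalSubalgebra ℂ (X →L[ℂ] X)) :
    Set (X →L[ℂ] ℂ) :=
  {f | (∀ x ∈ nestXminus 𝒩, f x = 0) ∧ ∃ x : X, x ≠ 0 ∧ f.smulRight x ∈ 𝒜}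

/-- `L` is a Lie `n`-derivation from the (not necessarily unital) subalgebra `𝒜` of
`B(X)` into `B(X)`. -/
def IsLieNDerivNU {X : Type*} [NormedAddCommGroup X] [NormedSpace ℂ X]
    (𝒜 : NonUnitalSubalgebra ℂ (X →L[ℂ] X)) (n : ℕ)
    (L : ↥𝒜 →ₗ[ℂ] (X →L[ℂ] X)) : Prop :=
  ∀ a : Fin n → ↥𝒜,
    L (commPoly n a) =
      ∑ k : Fin n,
        commPoly n (Function.update (fun i => ((a i : X →L[ℂ] X))) k (L (a k)))

/-- `D` is an (associative) derivation from the (not necessarily unital) subalgebra `𝒜`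
of `B(X)` into `B(X)`. -/
def IsDerivOnNU {X : Type*} [NormedAddCommGroup X] [NormedSpace ℂ X]
    (𝒜 : NonUnitalSubalgebra ℂ (X →L[ℂ] X))
    (D : ↥𝒜 →ₗ[ℂ] (X →L[ℂ] X)) : Prop :=
  ∀ a b : ↥𝒜, D (a * b) = D a * (b : X →L[ℂ] X) + (a : X →L[ℂ] X) * D b

/-!
Repeating one entry `h` in an iterated bracket turns it into a power of `ad h`, which suggests
taking `h` with `(ad h) ^ 3 = ad h`: the powers of `ad h` then only see the grading by the
eigenvalues `1, 0, -1`. The operator `h = y ⊗ f` is such an element, and the normalization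
`f y = -1` puts the operators `x ⊗ f` with `f x = 0` in degree `1`.

After subtracting an inner derivation, a Lie `n`-derivation `D` sends `h` to a scalar, so inserting
copies of `h` leaves short identities for `D` on words of two or three factors. In degree `1` they
force `D (x ⊗ f)` to be of the form `w ⊗ f`, where `x ↦ w` defines an operator `T` on `ker f`; this
is where `dim X > 2` enters, to have two independent vectors in `ker f`. Subtracting the inner
derivation by `T` makes `D` vanish in degree `1`. It then vanishes in degree `-1`, and in degree `0`
its values commute with all `x ⊗ f`, so they are scalars. If `D` is continuous, then so is `T`,
because `T` is read off from the values of `D` on the operators `x ⊗ f`.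
-/

section LieWords

/-- The right-normed iterated bracket `⁅a k, ⁅…, ⁅a 1, a 0⁆⁆⁆`. It agrees up to the sign
`(-1) ^ k` with the left-normed commutator `p_{k+1}(a 0, …, a k)`, and has the advantage that
repeating an entry amounts to iterating its adjoint action. -/
def lieWord {𝔤 : Type*} [Bracket 𝔤 𝔤] (a : ℕ → 𝔤) : ℕ → 𝔤
  | 0 => a 0
  | k + 1 => ⁅a (k + 1), lieWord a k⁆

/-- The formal derivative of `lieWord a k`: the sum over `i ≤ k` of the words in which the entry
`a i` is replaced by the module element `b i`. -/
def lieWordDeriv {𝔤 M : Type*} [Bracket 𝔤 𝔤] [Bracket 𝔤 M] [Sub M] (a : ℕ → 𝔤) (b : ℕ → M) :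
    ℕ → M
  | 0 => b 0
  | k + 1 => ⁅a (k + 1), lieWordDeriv a b k⁆ - ⁅lieWord a k, b (k + 1)⁆

/-- `D` obeys the Leibniz rule for brackets of `k + 1` factors. In the usual terminology, `D` is a
Lie `(k + 1)`-derivation with values in the module `M`. -/
def IsLieSuccDerivation {𝔤 M : Type*} [Bracket 𝔤 𝔤] [Bracket 𝔤 M] [Sub M] (k : ℕ)
    (D : 𝔤 → M) : Prop :=
  ∀ a : ℕ → 𝔤, D (lieWord a k) = lieWordDeriv a (fun i => D (a i)) k

variable {R 𝔤 M : Type*} [CommRing R] [LieRing 𝔤] [LieAlgebra R 𝔤]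
  [AddCommGroup M] [Module R M] [LieRingModule 𝔤 M] [LieModule R 𝔤 M]

theorem lieWordDeriv_add (a : ℕ → 𝔤) (b c : ℕ → M) (k : ℕ) :
    lieWordDeriv a (fun i => b i + c i) k = lieWordDeriv a b k + lieWordDeriv a c k := by
  induction k with
  | zero => rfl
  | succ k ih => simp only [lieWordDeriv, ih, lie_add]; abel

theorem lieWordDeriv_succ_eq_zero {a : ℕ → 𝔤} {b : ℕ → M} (hb : ∀ (x : 𝔤) i, ⁅x, b i⁆ = 0)
    (k : ℕ) : lieWordDeriv a b (k + 1) = 0 := by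
  induction k with
  | zero => simp only [lieWordDeriv, hb, sub_zero]
  | succ k ih => rw [lieWordDeriv, ih, lie_zero, hb, sub_zero]

theorem isLieSuccDerivation_lieDerivation (D : LieDerivation R 𝔤 M) (k : ℕ) :
    IsLieSuccDerivation k D := by
  intro a
  induction k with
  | zero => rfl
  | succ k ih => rw [lieWord, D.apply_lie_eq_sub, ih, lieWordDeriv]

namespace IsLieSuccDerivation

theorem add {k : ℕ} {D E : 𝔤 → M} (hD : IsLieSuccDerivation k D)
    (hE : IsLieSuccDerivation k E) : IsLieSuccDerivation k (D + E) := fun a => by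
  rw [Pi.add_apply, hD, hE, ← lieWordDeriv_add]
  rfl

theorem of_one {D : 𝔤 →ₗ[R] M} (hD : IsLieSuccDerivation 1 D) (k : ℕ) :
    IsLieSuccDerivation k D :=
  isLieSuccDerivation_lieDerivation
    (⟨D, fun x y => hD fun i => if i = 0 then y else x⟩ : LieDerivation R 𝔤 M) k

theorem exists_add_two {k : ℕ} {D : 𝔤 →ₗ[R] M} (hD : IsLieSuccDerivation k D) (hk : k ≠ 0) :
    ∃ m, IsLieSuccDerivation (m + 2) D := by
  match k, hk with
  | 1, _ => exact ⟨0, hD.of_one 2⟩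
  | m + 2, _ => exact ⟨m, hD⟩

theorem lieWord_succ_eq_zero {k : ℕ} {D : 𝔤 → M} (hD : IsLieSuccDerivation (k + 1) D)
    (hcentral : ∀ x y : 𝔤, ⁅x, D y⁆ = 0) (a : ℕ → 𝔤) : D (lieWord a (k + 1)) = 0 :=
  (hD a).trans (lieWordDeriv_succ_eq_zero (fun x i => hcentral x (a i)) k)

end IsLieSuccDerivation

section Padding

open LieModule

variable {a : ℕ → 𝔤} {h : 𝔤} {j : ℕ}

theorem lieWord_add_of_forall_lt_eq (ha : ∀ i > j, a i = h) (m : ℕ) :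
    lieWord a (j + m) = (toEnd R 𝔤 𝔤 h ^ m) (lieWord a j) := by
  induction m with
  | zero => rfl
  | succ m ih =>
    rw [← add_assoc, lieWord, ih, ha _ (by lia), pow_succ', Module.End.mul_apply,
      toEnd_apply_apply]

theorem lieWordDeriv_add_of_forall_lt_eq (ha : ∀ i > j, a i = h) {D : 𝔤 → M}
    (hh : ∀ x : 𝔤, ⁅x, D h⁆ = 0) (m : ℕ) :
    lieWordDeriv a (fun i => D (a i)) (j + m) =
      (toEnd R 𝔤 M h ^ m) (lieWordDeriv a (fun i => D (a i)) j) := by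
  induction m with
  | zero => rfl
  | succ m ih =>
    rw [← add_assoc, lieWordDeriv, ih, ha _ (by lia), hh, sub_zero, pow_succ',
      Module.End.mul_apply, toEnd_apply_apply]

namespace IsLieSuccDerivation

theorem map_toEnd_pow_lieWord {m : ℕ} {D : 𝔤 → M} (hD : IsLieSuccDerivation (j + m) D)
    (hh : ∀ x : 𝔤, ⁅x, D h⁆ = 0) (ha : ∀ i > j, a i = h) :
    D ((toEnd R 𝔤 𝔤 h ^ m) (lieWord a j)) =
      (toEnd R 𝔤 M h ^ m) (lieWordDeriv a (fun i => D (a i)) j) := by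
  rw [← lieWord_add_of_forall_lt_eq ha, hD, lieWordDeriv_add_of_forall_lt_eq (R := R) ha hh]

variable {D : 𝔤 → M}

theorem map_toEnd_pow {k : ℕ} (hD : IsLieSuccDerivation k D)
    (hh : ∀ x : 𝔤, ⁅x, D h⁆ = 0) (x : 𝔤) :
    D ((toEnd R 𝔤 𝔤 h ^ k) x) = (toEnd R 𝔤 M h ^ k) (D x) := by
  rw [← Nat.zero_add k] at hD
  simpa [lieWord, lieWordDeriv] using
    hD.map_toEnd_pow_lieWord (R := R) (a := fun i => [x].getD i h) hh
      fun i hi => List.getD_eq_default _ _ hi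

theorem map_toEnd_pow_lie {m : ℕ} (hD : IsLieSuccDerivation (m + 1) D)
    (hh : ∀ x : 𝔤, ⁅x, D h⁆ = 0) (x y : 𝔤) :
    D ((toEnd R 𝔤 𝔤 h ^ m) ⁅y, x⁆) = (toEnd R 𝔤 M h ^ m) (⁅y, D x⁆ - ⁅x, D y⁆) := by
  rw [Nat.add_comm] at hD
  simpa [lieWord, lieWordDeriv] using
    hD.map_toEnd_pow_lieWord (R := R) (a := fun i => [x, y].getD i h) hh
      fun i hi => List.getD_eq_default _ _ hi

theorem map_toEnd_pow_lie_lie {m : ℕ} (hD : IsLieSuccDerivation (m + 2) D)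
    (hh : ∀ x : 𝔤, ⁅x, D h⁆ = 0) (x y z : 𝔤) :
    D ((toEnd R 𝔤 𝔤 h ^ m) ⁅z, ⁅y, x⁆⁆) =
      (toEnd R 𝔤 M h ^ m) (⁅z, ⁅y, D x⁆ - ⁅x, D y⁆⁆ - ⁅⁅y, x⁆, D z⁆) := by
  rw [Nat.add_comm] at hD
  simpa [lieWord, lieWordDeriv] using
    hD.map_toEnd_pow_lieWord (R := R) (a := fun i => [x, y, z].getD i h) hh
      fun i hi => List.getD_eq_default _ _ hi

end IsLieSuccDerivation

end Padding

end LieWords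

section Grading

open LieModule

theorem pow_two_mul_add_one_of_pow_three_eq_self {G : Type*} [Monoid G] {g : G} (hg : g ^ 3 = g)
    (n : ℕ) : g ^ (2 * n + 1) = g := by
  induction n with
  | zero => exact pow_one g
  | succ n ih => rw [show 2 * (n + 1) + 1 = 2 * n + 1 + 2 by ring, pow_add, ih, ← pow_succ', hg]

theorem exists_eq_add_of_pow_three_eq_self {R M : Type*} [CommRing R] [Invertible (2 : R)]
    [AddCommGroup M] [Module R M] {δ : Module.End R M} (hδ : δ ^ 3 = δ) (x : M) :
    ∃ x₁ x₀ x₂, δ x₁ = x₁ ∧ δ x₀ = 0 ∧ δ x₂ = -x₂ ∧ x = x₁ + x₀ + x₂ := by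
  have hx : δ (δ (δ x)) = δ x := LinearMap.congr_fun hδ x
  refine ⟨(⅟2 : R) • (δ (δ x) + δ x), x - δ (δ x), (⅟2 : R) • (δ (δ x) - δ x), ?_, ?_, ?_, ?_⟩
  · rw [map_smul, map_add, hx, add_comm]
  · rw [map_sub, hx, sub_self]
  · rw [map_smul, map_sub, hx, ← smul_neg, neg_sub]
  · have htwo : (⅟2 : R) • δ (δ x) + (⅟2 : R) • δ (δ x) = δ (δ x) := by
      rw [← add_smul, invOf_two_add_invOf_two, one_smul]
    linear_combination (norm := module) -htwo

variable {R 𝔤 M : Type*} [CommRing R] [LieRing 𝔤] [LieAlgebra R 𝔤]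
  [AddCommGroup M] [Module R M] [LieRingModule 𝔤 M] [LieModule R 𝔤 M] {h : 𝔤}

theorem toEnd_pow_apply_of_lie_eq_smul {c : R} {m : M} (hm : ⁅h, m⁆ = c • m) (k : ℕ) :
    (toEnd R 𝔤 M h ^ k) m = c ^ k • m := by
  induction k with
  | zero => rw [pow_zero, pow_zero, one_smul, Module.End.one_apply]
  | succ k ih =>
    rw [pow_succ', Module.End.mul_apply, ih, map_smul, toEnd_apply_apply, hm, smul_smul, pow_succ]

theorem toEnd_pow_apply_of_lie_eq_self {m : M} (hm : ⁅h, m⁆ = m) (k : ℕ) :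
    (toEnd R 𝔤 M h ^ k) m = m := by
  rw [toEnd_pow_apply_of_lie_eq_smul (c := 1) (by rwa [one_smul]), one_pow, one_smul]

theorem lie_lie_eq_self_of_lie_eq_zero {x : 𝔤} {m : M} (hx : ⁅h, x⁆ = x) (hm : ⁅h, m⁆ = 0) :
    ⁅h, ⁅x, m⁆⁆ = ⁅x, m⁆ := by
  rw [leibniz_lie, hx, hm, lie_zero, add_zero]

theorem exists_lie_add_inner_eq_zero (hM : toEnd R 𝔤 M h ^ 3 = toEnd R 𝔤 M h) (D : 𝔤 →ₗ[R] M) :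
    ∃ m, ⁅h, D h + LieDerivation.inner R 𝔤 M m h⁆ = 0 := by
  have hDh : ⁅h, ⁅h, ⁅h, D h⁆⁆⁆ = ⁅h, D h⁆ := LinearMap.congr_fun hM (D h)
  refine ⟨-⁅h, D h⁆, ?_⟩
  simp only [LieDerivation.inner_apply_apply, lie_add, lie_neg, hDh, add_neg_cancel]

theorem lieWord_eq_of_lie_eq_self {x : 𝔤} (hx : ⁅h, x⁆ = x) (k : ℕ) :
    lieWord (fun i => if i = 0 then x else h) k = x := by
  induction k with
  | zero => rfl
  | succ k ih => rw [lieWord, ih]; exact hx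

namespace IsLieSuccDerivation

variable {k : ℕ} {D : 𝔤 → M}

theorem map_eq_toEnd_pow_sub (hD : IsLieSuccDerivation k D) (hDh : ⁅h, D h⁆ = 0) {x : 𝔤}
    (hx : ⁅h, x⁆ = x) : D x = (toEnd R 𝔤 M h ^ k) (D x) - k • ⁅x, D h⁆ := by
  let a : ℕ → 𝔤 := fun i => if i = 0 then x else h
  have hword (i : ℕ) : lieWord a i = x := lieWord_eq_of_lie_eq_self hx i
  have hderiv (i : ℕ) :
      lieWordDeriv a (fun j => D (a j)) i = (toEnd R 𝔤 M h ^ i) (D x) - i • ⁅x, D h⁆ := by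
    induction i with
    | zero => simp [lieWordDeriv, a]
    | succ i ih =>
      rw [lieWordDeriv, ih, hword, pow_succ', Module.End.mul_apply, toEnd_apply_apply, succ_nsmul,
        ← sub_sub]
      simp only [a, if_neg i.succ_ne_zero, lie_sub, lie_nsmul,
        lie_lie_eq_self_of_lie_eq_zero hx hDh]
  rw [← hderiv, ← hD, hword]

theorem lie_map_eq_zero [IsAddTorsionFree M] (hD : IsLieSuccDerivation k D) (hk : k ≠ 0)
    (hM : toEnd R 𝔤 M h ^ 3 = toEnd R 𝔤 M h) (hDh : ⁅h, D h⁆ = 0) {x : 𝔤} (hx : ⁅h, x⁆ = x) :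
    ⁅x, D h⁆ = 0 := by
  set δ := toEnd R 𝔤 M h
  set u := ⁅x, D h⁆
  have hu : ⁅h, u⁆ = u := lie_lie_eq_self_of_lie_eq_zero hx hDh
  have hδu : δ u = u := hu
  have hδku : (δ ^ k) u = u := toEnd_pow_apply_of_lie_eq_self hu k
  have hDx : D x = (δ ^ k) (D x) - k • u := hD.map_eq_toEnd_pow_sub hDh hx
  have hδDx : δ (D x) = δ (D x) - (2 * k) • u :=
    calc δ (D x) = δ ((δ ^ k) ((δ ^ k) (D x) - k • u) - k • u) := by rw [← hDx, ← hDx]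
      _ = (δ ^ (2 * k + 1)) (D x) - (2 * k) • u := by
        simp only [map_sub, map_nsmul, hδu, hδku, pow_succ', two_mul, pow_add, add_nsmul,
          Module.End.mul_apply, ← sub_sub]
      _ = δ (D x) - (2 * k) • u := by rw [pow_two_mul_add_one_of_pow_three_eq_self hM]
  have h2u : (2 * k) • u = 0 := by rwa [eq_comm, sub_eq_self] at hδDx
  exact (smul_eq_zero.mp h2u).resolve_left (by lia)

theorem lie_map_eq_zero_of_lie_eq_zero (hD : IsLieSuccDerivation (k + 1) D) (hD0 : D 0 = 0)
    (hh : ∀ x : 𝔤, ⁅x, D h⁆ = 0) (hM : toEnd R 𝔤 M h ^ 3 = toEnd R 𝔤 M h)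
    {x : 𝔤} (hx : ⁅h, x⁆ = 0) : ⁅h, D x⁆ = 0 := by
  have hpow : (toEnd R 𝔤 M h ^ (k + 1)) (D x) = 0 := by
    rw [← hD.map_toEnd_pow hh, pow_succ, Module.End.mul_apply, toEnd_apply_apply, hx, map_zero,
      hD0]
  rw [← toEnd_apply_apply R, ← pow_two_mul_add_one_of_pow_three_eq_self hM (k + 1),
    show 2 * (k + 1) + 1 = k + 2 + (k + 1) by ring, pow_add, Module.End.mul_apply, hpow, map_zero]

theorem lie_map_eq_zero_of_map_eq_zero (hD : IsLieSuccDerivation (k + 1) D)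
    (hh : ∀ x : 𝔤, ⁅x, D h⁆ = 0) (hker : ∀ x, ⁅h, x⁆ = x → D x = 0)
    {x y : 𝔤} (hx : ⁅h, x⁆ = 0) (hDx : ⁅h, D x⁆ = 0) (hy : ⁅h, y⁆ = y) : ⁅y, D x⁆ = 0 := by
  have hyx : ⁅h, ⁅y, x⁆⁆ = ⁅y, x⁆ := lie_lie_eq_self_of_lie_eq_zero hy hx
  have hyDx : ⁅h, ⁅y, D x⁆⁆ = ⁅y, D x⁆ := lie_lie_eq_self_of_lie_eq_zero hy hDx
  have hmap := hD.map_toEnd_pow_lie (R := ℤ) hh x y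
  rwa [toEnd_pow_apply_of_lie_eq_self hyx, hker _ hyx, hker y hy, lie_zero, sub_zero,
    toEnd_pow_apply_of_lie_eq_self hyDx, eq_comm] at hmap

end IsLieSuccDerivation

end Grading

section RankOne

open LieModule

/-- `col x` acts on the Lie module `V` as the rank-one operator `x ⊗ f : z ↦ f z • x`.
For `f x = 0` and `f y = -1` this gives `⁅col y, col x⁆ = col x` up to faithfulness. -/
def IsRankOneMap {K V 𝔤 : Type*} [CommRing K] [AddCommGroup V] [Module K V] [LieRing 𝔤]
    [LieAlgebra K 𝔤] [LieRingModule 𝔤 V] (f : V →ₗ[K] K) (col : V →ₗ[K] 𝔤) : Prop :=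
  ∀ x z, ⁅col x, z⁆ = f z • x

theorem IsRankOneMap.lie_col_apply {K V 𝔤 : Type*} [CommRing K] [AddCommGroup V] [Module K V]
    [LieRing 𝔤] [LieAlgebra K 𝔤] [LieRingModule 𝔤 V] {f : V →ₗ[K] K} {col : V →ₗ[K] 𝔤}
    (hcol : IsRankOneMap f col) (x z : V) : ⁅col x, z⁆ = f z • x :=
  hcol x z

theorem exists_mem_ker_notMem_span_singleton {K V : Type*} [Field K] [AddCommGroup V] [Module K V]
    (hdim : 2 < Module.rank K V) (f : V →ₗ[K] K) (a : V) :
    ∃ b, f b = 0 ∧ b ∉ Submodule.span K {a} := by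
  by_contra! hker
  obtain ⟨y, hy⟩ : ∃ y, ∀ x, x - f x • y ∈ LinearMap.ker f := by
    by_cases hf : f = 0
    · exact ⟨0, fun x => by simp [hf]⟩
    · obtain ⟨y, hy⟩ := LinearMap.surjective hf 1
      exact ⟨y, fun x => by simp [hy]⟩
  have hspan : Submodule.span K (({a, y} : Finset V) : Set V) = ⊤ := by
    refine eq_top_iff.mpr fun x _ => ?_
    rw [Finset.coe_pair, Submodule.mem_span_pair]
    obtain ⟨r, hr⟩ := Submodule.mem_span_singleton.mp (hker _ (hy x))
    exact ⟨r, f x, by rw [hr, sub_add_cancel]⟩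
  have hrank := rank_span_finset_le (R := K) ({a, y} : Finset V)
  rw [hspan, rank_top] at hrank
  exact (hdim.trans_le hrank).not_ge (mod_cast Finset.card_le_two)

namespace IsRankOneMap

section CommRing

variable {K V 𝔤 : Type*} [CommRing K] [AddCommGroup V] [Module K V]
  [LieRing 𝔤] [LieAlgebra K 𝔤] [LieRingModule 𝔤 V] [LieModule K 𝔤 V]
  {f : V →ₗ[K] K} {col : V →ₗ[K] 𝔤} {y : V}

theorem toEnd_pow_three (hcol : IsRankOneMap f col) (hy : f y = -1) :
    toEnd K 𝔤 (Module.End K V) (col y) ^ 3 = toEnd K 𝔤 (Module.End K V) (col y) := by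
  ext A z
  simp only [pow_succ, pow_zero, one_mul, Module.End.mul_apply, toEnd_apply_apply,
    LieHom.lie_apply, hcol.lie_col_apply, map_sub, map_smul, smul_eq_mul, hy]
  module

theorem lie_col_lie_col_end (hcol : IsRankOneMap f col) {a b : V} (ha : f a = 0) (hb : f b = 0)
    (A : Module.End K V) :
    ⁅col a, ⁅col b, A⁆⁆ = -(f (A b) • f.smulRight a + f (A a) • f.smulRight b) := by
  ext z
  simp only [LieHom.lie_apply, hcol.lie_col_apply, map_sub, map_smul, smul_eq_mul, ha, hb,
    LinearMap.neg_apply, LinearMap.add_apply, LinearMap.smul_apply, LinearMap.smulRight_apply]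
  module

theorem lie_smulRight (hcol : IsRankOneMap f col) (hy : f y = -1) {x : V} (hx : f x = 0) :
    ⁅col y, f.smulRight x⁆ = f.smulRight x := by
  ext z
  simp [hcol.lie_col_apply, hx, hy]

theorem toEnd_pow_smulRight (hcol : IsRankOneMap f col) (hy : f y = -1) {x : V} (hx : f x = 0)
    (k : ℕ) : (toEnd K 𝔤 (Module.End K V) (col y) ^ k) (f.smulRight x) = f.smulRight x :=
  toEnd_pow_apply_of_lie_eq_self (hcol.lie_smulRight hy hx) k

theorem exists_eq_smul_one (hcol : IsRankOneMap f col) (hy : f y = -1) {A : Module.End K V}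
    (hA : ∀ x, ⁅col x, A⁆ = 0) : ∃ r : K, A = r • 1 := by
  refine ⟨-f (A y), LinearMap.ext fun x => ?_⟩
  have hxy : ⁅col x, A⁆ y = 0 := by rw [hA, LinearMap.zero_apply]
  simp only [LieHom.lie_apply, hcol.lie_col_apply, map_smul, hy] at hxy
  simp only [LinearMap.smul_apply, Module.End.one_apply]
  linear_combination (norm := module) hxy

theorem exists_eq_smul_one_of_ker (hcol : IsRankOneMap f col) (hy : f y = -1)
    {A : Module.End K V} (hAy : ⁅col y, A⁆ = 0) (hA : ∀ x, f x = 0 → ⁅col x, A⁆ = 0) :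
    ∃ r : K, A = r • 1 := by
  refine hcol.exists_eq_smul_one hy fun x => ?_
  have hx : col x = col (x + f x • y) - f x • col y := by simp
  rw [hx, sub_lie, smul_lie, hAy, hA _ (by simp [hy]), smul_zero, sub_zero]

theorem exists_eq_smulRight_of_lie_eq (hcol : IsRankOneMap f col) (hy : f y = -1)
    {A B : Module.End K V} (hB : ⁅col y, A⁆ = B) (hker : ∀ z, f z = 0 → f (B z) = 0) :
    ∃ w, f w = 0 ∧ B = f.smulRight w := by
  have hBz (z : V) : B z = f (A z) • y - f z • A y := by
    rw [← hB, LieHom.lie_apply, hcol.lie_col_apply, hcol.lie_col_apply, map_smul]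
  have hBker (z : V) (hz : f z = 0) : B z = 0 := by
    have hfBz := hker z hz
    simp only [hBz, hz, zero_smul, sub_zero, map_smul, hy, smul_eq_mul, mul_neg_one,
      neg_eq_zero] at hfBz
    simp [hBz, hz, hfBz]
  refine ⟨-B y, by simp [hBz, hy], LinearMap.ext fun z => ?_⟩
  have hz := hBker (z + f z • y) (by simp [hy])
  rw [map_add, map_smul] at hz
  rw [LinearMap.smulRight_apply, smul_neg, eq_neg_of_add_eq_zero_left hz]

theorem exists_eq_smulRight_of_toEnd_pow_eq (hcol : IsRankOneMap f col) (hy : f y = -1)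
    {k : ℕ} {A B : Module.End K V} (hB : (toEnd K 𝔤 (Module.End K V) (col y) ^ (k + 1)) A = B)
    (hker : ∀ z, f z = 0 → f (B z) = 0) : ∃ w, f w = 0 ∧ B = f.smulRight w := by
  rw [pow_succ', Module.End.mul_apply, toEnd_apply_apply] at hB
  exact hcol.exists_eq_smulRight_of_lie_eq hy hB hker

variable [IsFaithful K 𝔤 V]

theorem toEnd_self_pow_three (hcol : IsRankOneMap f col) (hy : f y = -1) :
    toEnd K 𝔤 𝔤 (col y) ^ 3 = toEnd K 𝔤 𝔤 (col y) := by
  ext A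
  refine ext_of_isFaithful (R := K) (M := V) fun z => ?_
  simp only [pow_succ, pow_zero, one_mul, Module.End.mul_apply, toEnd_apply_apply,
    hcol.lie_col_apply, lie_lie, lie_smul, map_sub, map_smul, smul_eq_mul, hy]
  module

theorem lie_eq_self (hcol : IsRankOneMap f col) (hy : f y = -1) {x : V} (hx : f x = 0) :
    ⁅col y, col x⁆ = col x := by
  refine ext_of_isFaithful (R := K) (M := V) fun z => ?_
  simp [hcol.lie_col_apply, hx, hy]

theorem lie_col_lie_col (hcol : IsRankOneMap f col) {a : V} (ha : f a = 0) (A : 𝔤) :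
    ⁅col a, ⁅col a, A⁆⁆ = -(2 * f ⁅A, a⁆) • col a := by
  refine ext_of_isFaithful (R := K) (M := V) fun z => ?_
  simp only [lie_lie, hcol.lie_col_apply, lie_smul, smul_lie, map_sub, map_smul,
    smul_eq_mul, ha]
  module

end CommRing

section Field

variable {K V 𝔤 : Type*} [Field K] [AddCommGroup V] [Module K V]
  [LieRing 𝔤] [LieAlgebra K 𝔤] [LieRingModule 𝔤 V] [LieModule K 𝔤 V]
  {f : V →ₗ[K] K} {col : V →ₗ[K] 𝔤} {y : V}

theorem exists_lie_eq_smul_of_lie_eq_neg [NeZero (2 : K)] (hcol : IsRankOneMap f col)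
    (hy : f y = -1) {A : 𝔤} (hA : ⁅col y, A⁆ = -A) :
    ∃ g : V →ₗ[K] K, g y = 0 ∧ ∀ z, ⁅A, z⁆ = g z • y := by
  have hAz (z : V) : -⁅A, z⁆ = f ⁅A, z⁆ • y - f z • ⁅A, y⁆ := by
    rw [← neg_lie, ← hA, lie_lie, hcol.lie_col_apply, hcol.lie_col_apply, lie_smul]
  have hfAy : f ⁅A, y⁆ = 0 := by
    have := congrArg f (hAz y)
    simp only [map_neg, map_sub, map_smul, smul_eq_mul, hy] at this
    linear_combination -this
  have hAy : ⁅A, y⁆ = 0 := by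
    have hy' := hAz y
    rw [hfAy, hy, zero_smul] at hy'
    exact (smul_eq_zero_iff_right (two_ne_zero (α := K))).mp
      (by linear_combination (norm := module) -hy')
  refine ⟨-(f ∘ₗ toEnd K 𝔤 V A), by simp [hAy], fun z => ?_⟩
  rw [← neg_neg ⁅A, z⁆, hAz, hAy, smul_zero, sub_zero, ← neg_smul]
  rfl

variable [IsFaithful K 𝔤 V]

theorem exists_eq_of_lie_eq_self [NeZero (2 : K)] (hcol : IsRankOneMap f col) (hy : f y = -1)
    {A : 𝔤} (hA : ⁅col y, A⁆ = A) : ∃ x, f x = 0 ∧ A = col x := by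
  have hAz (z : V) : ⁅A, z⁆ = f ⁅A, z⁆ • y - f z • ⁅A, y⁆ := by
    conv_lhs => rw [← hA, lie_lie, hcol.lie_col_apply, hcol.lie_col_apply, lie_smul]
  have hfAz (z : V) : f ⁅A, z⁆ = -f ⁅A, z⁆ - f z * f ⁅A, y⁆ := by
    conv_lhs => rw [hAz, map_sub, map_smul, map_smul, hy, smul_eq_mul, smul_eq_mul, mul_neg_one]
  have hfAy : f ⁅A, y⁆ = 0 := by linear_combination hfAz y - f ⁅A, y⁆ * hy
  have hfA (z : V) : f ⁅A, z⁆ = 0 :=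
    (mul_eq_zero_iff_left two_ne_zero).mp (by linear_combination hfAz z - f z * hfAy)
  refine ⟨-⁅A, y⁆, by rw [map_neg, hfAy, neg_zero], ext_of_isFaithful (R := K) (M := V) fun z => ?_⟩
  rw [hAz, hfA, hcol.lie_col_apply, zero_smul, zero_sub, smul_neg]

variable {m : ℕ} {D : 𝔤 →ₗ[K] Module.End K V}

theorem smul_add_smul_eq_of_ker (hcol : IsRankOneMap f col) (hy : f y = -1)
    (hD : IsLieSuccDerivation (m + 2) D) (hh : ∀ x : 𝔤, ⁅x, D (col y)⁆ = 0) {a b : V}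
    (ha : f a = 0) (hb : f b = 0) :
    f (D (col a) b) • a + f (D (col a) a) • b = (2 * f (D (col b) a)) • a := by
  have hba : ⁅col b, col a⁆ = 0 :=
    ext_of_isFaithful (R := K) (M := V) fun z => by simp [hcol.lie_col_apply, ha, hb]
  have htriple := hD.map_toEnd_pow_lie_lie (R := K) hh (col a) (col b) (col a)
  simp only [hba, lie_zero, map_zero, zero_lie, sub_zero, lie_sub,
    hcol.lie_col_lie_col_end ha hb, hcol.lie_col_lie_col_end ha ha, map_neg, map_sub, map_add,
    map_smul, hcol.toEnd_pow_smulRight hy ha, hcol.toEnd_pow_smulRight hy hb] at htriple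
  have hy' := LinearMap.congr_fun htriple y
  simp only [LinearMap.zero_apply, LinearMap.sub_apply, LinearMap.neg_apply, LinearMap.add_apply,
    LinearMap.smul_apply, LinearMap.smulRight_apply, hy] at hy'
  linear_combination (norm := module) -hy'

theorem three_mul_smul_add_smul_eq_zero (hcol : IsRankOneMap f col) (hy : f y = -1)
    (hD : IsLieSuccDerivation (m + 2) D) (hh : ∀ x : 𝔤, ⁅x, D (col y)⁆ = 0)
    (hDcol : ∀ x, f x = 0 → D (col x) = 0) {A : 𝔤} (hA : ⁅col y, A⁆ = -A) {g : V →ₗ[K] K}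
    (hgy : g y = 0) (hg : ∀ z, ⁅A, z⁆ = g z • y) {w : V} (hw : f w = 0)
    (hDA : D A = f.smulRight w) (hsign : (-1 : K) ^ m • D A = D A) {x : V} (hx : f x = 0) :
    (3 * g x) • w + g w • x = 0 := by
  have htriple := hD.map_toEnd_pow_lie_lie (R := K) hh A (col x) A
  have hword : ⁅A, ⁅col x, A⁆⁆ = -(2 * g x) • A :=
    ext_of_isFaithful (R := K) (M := V) fun z => by
      simp only [lie_lie, hcol.lie_col_apply, lie_smul, smul_lie, hg, hgy, map_sub, map_smul, hy,
        smul_eq_mul]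
      module
  have hDword : ⁅col x, D A⁆ = 0 := by
    rw [hDA]; ext z; simp [hcol.lie_col_apply, hx, hw]
  have hlast : ⁅⁅col x, A⁆, D A⁆ = -f.smulRight (g w • x + g x • w) := by
    rw [hDA]
    ext z
    simp only [lie_lie, LinearMap.sub_apply, LinearMap.neg_apply, LieHom.lie_apply,
      LinearMap.smulRight_apply, hcol.lie_col_apply, hg, hx, hw, hy, map_sub, map_smul,
      smul_eq_mul]
    module
  rw [hword, map_smul, toEnd_pow_apply_of_lie_eq_smul (c := (-1 : K)) (by simp [hA]), map_smul,
    map_smul, hsign, hDword, hDcol x hx, lie_zero, sub_zero, lie_zero, zero_sub, hlast, neg_neg,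
    hcol.toEnd_pow_smulRight hy (by simp [hx, hw]), hDA] at htriple
  have hy' := LinearMap.congr_fun htriple y
  simp only [LinearMap.smul_apply, LinearMap.smulRight_apply, hy] at hy'
  linear_combination (norm := module) hy'

variable [CharZero K]

theorem apply_map_col_apply_eq_zero (hcol : IsRankOneMap f col) (hdim : 2 < Module.rank K V)
    (hy : f y = -1) (hD : IsLieSuccDerivation (m + 2) D) (hh : ∀ x : 𝔤, ⁅x, D (col y)⁆ = 0)
    {a b : V} (ha : f a = 0) (hb : f b = 0) : f (D (col a) b) = 0 := by
  have hsymm {a b : V} (ha : f a = 0) (hb : f b = 0) :=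
    hcol.smul_add_smul_eq_of_ker hy hD hh ha hb
  have hdiag {a : V} (ha : f a = 0) : f (D (col a) a) = 0 := by
    obtain ⟨b, hb, hab⟩ := exists_mem_ker_notMem_span_singleton hdim f a
    by_contra hne
    refine hab (Submodule.mem_span_singleton.mpr
      ⟨(f (D (col a) a))⁻¹ * (2 * f (D (col b) a) - f (D (col a) b)), ?_⟩)
    rw [← smul_smul, sub_smul, ← hsymm ha hb, add_sub_cancel_left, inv_smul_smul₀ hne]
  have hdouble {a b : V} (ha : f a = 0) (hb : f b = 0) :
      f (D (col a) b) = 2 * f (D (col b) a) := by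
    rcases eq_or_ne a 0 with rfl | hne
    · simp
    · have hab := hsymm ha hb
      rw [hdiag ha, zero_smul, add_zero] at hab
      exact smul_left_injective K hne hab
  exact (mul_eq_zero_iff_left (three_ne_zero (α := K))).mp
    (by linear_combination -hdouble ha hb - 2 * hdouble hb ha)

theorem exists_map_col_eq_smulRight (hcol : IsRankOneMap f col) (hdim : 2 < Module.rank K V)
    (hy : f y = -1) (hD : IsLieSuccDerivation (m + 2) D) (hh : ∀ x : 𝔤, ⁅x, D (col y)⁆ = 0)
    {a : V} (ha : f a = 0) : ∃ w, f w = 0 ∧ D (col a) = f.smulRight w := by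
  have hpow := hD.map_toEnd_pow (R := K) hh (col a)
  rw [toEnd_pow_apply_of_lie_eq_self (hcol.lie_eq_self hy ha)] at hpow
  exact hcol.exists_eq_smulRight_of_toEnd_pow_eq hy hpow.symm
    fun z hz => hcol.apply_map_col_apply_eq_zero hdim hy hD hh ha hz

theorem exists_map_col_add_lie_eq_zero (hcol : IsRankOneMap f col) (hdim : 2 < Module.rank K V)
    (hy : f y = -1) (hD : IsLieSuccDerivation (m + 2) D) (hh : ∀ x : 𝔤, ⁅x, D (col y)⁆ = 0) :
    ∃ T : Module.End K V, ⁅col y, T⁆ = 0 ∧ ∀ x, f x = 0 → D (col x) + ⁅col x, T⁆ = 0 := by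
  let T : Module.End K V :=
    -(LinearMap.applyₗ y ∘ₗ D ∘ₗ col ∘ₗ (LinearMap.id + f.smulRight y))
  have hT (x : V) : T x = -D (col (x + f x • y)) y := rfl
  have hTy : T y = 0 := by simp [hT, hy]
  have hfT (x : V) : f (T x) = 0 := by
    obtain ⟨w, hw, hDw⟩ := hcol.exists_map_col_eq_smulRight hdim hy hD hh
      (a := x + f x • y) (by simp [hy])
    rw [hT, map_neg, hDw, LinearMap.smulRight_apply, map_smul, hw, smul_zero, neg_zero]
  refine ⟨T, ?_, fun x hx => ?_⟩ <;> ext z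
  · simp [hcol.lie_col_apply, hTy, hfT]
  · obtain ⟨w, -, hDw⟩ := hcol.exists_map_col_eq_smulRight hdim hy hD hh hx
    have hTx : T x = w := by simp [hT, hx, hDw, hy]
    simp [hcol.lie_col_apply, hfT, hTx, hDw]

theorem apply_map_apply_eq_zero (hcol : IsRankOneMap f col) (hy : f y = -1)
    (hD : IsLieSuccDerivation (m + 2) D) (hh : ∀ x : 𝔤, ⁅x, D (col y)⁆ = 0)
    (hDcol : ∀ x, f x = 0 → D (col x) = 0) (A : 𝔤) {a : V} (ha : f a = 0) : f (D A a) = 0 := by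
  have htriple := hD.map_toEnd_pow_lie_lie (R := K) hh A (col a) (col a)
  rw [hcol.lie_col_lie_col ha, map_smul,
    toEnd_pow_apply_of_lie_eq_self (hcol.lie_eq_self hy ha), map_smul, hDcol a ha, lie_zero,
    sub_zero, lie_zero, sub_zero, hcol.lie_col_lie_col_end ha ha, map_neg, map_add, map_smul,
    hcol.toEnd_pow_smulRight hy ha, smul_zero] at htriple
  have hy' := LinearMap.congr_fun htriple y
  simp only [LinearMap.zero_apply, LinearMap.neg_apply, LinearMap.add_apply, LinearMap.smul_apply,
    LinearMap.smulRight_apply, hy] at hy'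
  rcases eq_or_ne a 0 with rfl | hne
  · rw [map_zero, map_zero]
  · refine (smul_eq_zero_iff_left hne).mp
      ((smul_eq_zero_iff_right (two_ne_zero (α := K))).mp ?_)
    linear_combination (norm := module) -hy'

theorem exists_map_eq_smulRight_of_lie_eq_neg (hcol : IsRankOneMap f col) (hy : f y = -1)
    (hD : IsLieSuccDerivation (m + 2) D) (hh : ∀ x : 𝔤, ⁅x, D (col y)⁆ = 0)
    (hDcol : ∀ x, f x = 0 → D (col x) = 0) {A : 𝔤} (hA : ⁅col y, A⁆ = -A) :
    ∃ w, f w = 0 ∧ D A = f.smulRight w ∧ (-1 : K) ^ m • D A = D A := by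
  have hDA : (toEnd K 𝔤 (Module.End K V) (col y) ^ (m + 2)) (D A) = (-1 : K) ^ m • D A := by
    rw [← hD.map_toEnd_pow hh, toEnd_pow_apply_of_lie_eq_smul (c := (-1 : K)) (by simp [hA]),
      map_smul, pow_add, neg_one_sq, mul_one]
  obtain ⟨w, hw, hDw⟩ := hcol.exists_eq_smulRight_of_toEnd_pow_eq hy hDA fun z hz => by
    simp [hcol.apply_map_apply_eq_zero hy hD hh hDcol A hz]
  have hDA' : D A = f.smulRight w :=
    calc D A = (-1 : K) ^ m • (-1 : K) ^ m • D A := by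
          rw [smul_smul, ← mul_pow, neg_one_mul, neg_neg, one_pow, one_smul]
      _ = (toEnd K 𝔤 (Module.End K V) (col y) ^ (m + 2)) ((-1 : K) ^ m • D A) := by
          rw [map_smul, hDA]
      _ = f.smulRight w := by rw [hDw, hcol.toEnd_pow_smulRight hy hw]
  exact ⟨w, hw, hDA', hDw.trans hDA'.symm⟩

theorem map_eq_zero_of_lie_eq_neg (hcol : IsRankOneMap f col) (hy : f y = -1)
    (hD : IsLieSuccDerivation (m + 2) D) (hh : ∀ x : 𝔤, ⁅x, D (col y)⁆ = 0)
    (hDcol : ∀ x, f x = 0 → D (col x) = 0) {A : 𝔤} (hA : ⁅col y, A⁆ = -A) : D A = 0 := by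
  obtain ⟨g, hgy, hg⟩ := hcol.exists_lie_eq_smul_of_lie_eq_neg hy hA
  obtain ⟨w, hw, hDA, hsign⟩ := hcol.exists_map_eq_smulRight_of_lie_eq_neg hy hD hh hDcol hA
  have hrel {x : V} (hx : f x = 0) : (3 * g x) • w + g w • x = 0 :=
    hcol.three_mul_smul_add_smul_eq_zero hy hD hh hDcol hA hgy hg hw hDA hsign hx
  rcases eq_or_ne w 0 with rfl | hne
  · rw [hDA, LinearMap.smulRight_zero]
  have hgw : g w = 0 := by
    have hww := hrel hw
    rw [← add_smul, smul_eq_zero_iff_left hne] at hww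
    exact (mul_eq_zero_iff_left (by norm_num : (4 : K) ≠ 0)).mp (by linear_combination hww)
  have hgker {x : V} (hx : f x = 0) : g x = 0 := by
    have hxw := hrel hx
    rw [hgw, zero_smul, add_zero, smul_eq_zero_iff_left hne] at hxw
    exact (mul_eq_zero_iff_left three_ne_zero).mp hxw
  have hg0 (z : V) : g z = 0 := by
    have hz := hgker (x := z + f z • y) (by simp [hy])
    rwa [map_add, map_smul, hgy, smul_zero, add_zero] at hz
  have hA0 : A = 0 := ext_of_isFaithful (R := K) (M := V) fun z => by
    rw [hg, hg0, zero_smul, zero_lie]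
  rw [hA0, map_zero]

theorem exists_map_eq_smul_one (hcol : IsRankOneMap f col) (hy : f y = -1)
    (hD : IsLieSuccDerivation (m + 2) D) (hh : ∀ x : 𝔤, ⁅x, D (col y)⁆ = 0)
    (hDcol : ∀ x, f x = 0 → D (col x) = 0) (A : 𝔤) : ∃ r : K, D A = r • 1 := by
  have hker (x : 𝔤) (hx : ⁅col y, x⁆ = x) : D x = 0 := by
    obtain ⟨a, ha, rfl⟩ := hcol.exists_eq_of_lie_eq_self hy hx
    exact hDcol a ha
  let _ : Invertible (2 : K) := invertibleOfNonzero two_ne_zero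
  obtain ⟨A₁, A₀, A₂, h₁, h₀, h₂, rfl⟩ :=
    exists_eq_add_of_pow_three_eq_self (hcol.toEnd_self_pow_three hy) A
  have hDA₀ : ⁅col y, D A₀⁆ = 0 :=
    hD.lie_map_eq_zero_of_lie_eq_zero (map_zero D) hh (hcol.toEnd_pow_three hy) h₀
  rw [map_add, map_add, hker A₁ h₁, hcol.map_eq_zero_of_lie_eq_neg hy hD hh hDcol h₂, zero_add,
    add_zero]
  exact hcol.exists_eq_smul_one_of_ker hy hDA₀ fun x hx =>
    hD.lie_map_eq_zero_of_map_eq_zero hh hker h₀ hDA₀ (hcol.lie_eq_self hy hx)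

theorem exists_map_add_lie_eq_smul_one (hcol : IsRankOneMap f col) (hdim : 2 < Module.rank K V)
    (hf : f ≠ 0) {k : ℕ} (hk : k ≠ 0) (hD : IsLieSuccDerivation k D) :
    ∃ T : Module.End K V, ∀ A, ∃ r : K, D A + ⁅A, T⁆ = r • 1 := by
  obtain ⟨y, hy⟩ := LinearMap.surjective hf (-1)
  obtain ⟨m, hD⟩ := hD.exists_add_two hk
  obtain ⟨S, hS⟩ := exists_lie_add_inner_eq_zero (hcol.toEnd_pow_three hy) D
  let E : 𝔤 →ₗ[K] Module.End K V := D + LieDerivation.inner K 𝔤 _ S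
  have hE : IsLieSuccDerivation (m + 2) E :=
    hD.add (isLieSuccDerivation_lieDerivation (LieDerivation.inner K 𝔤 _ S) _)
  have : IsAddTorsionFree (Module.End K V) := .of_isTorsionFree K _
  obtain ⟨r, hr⟩ : ∃ r : K, E (col y) = r • 1 :=
    hcol.exists_eq_smul_one_of_ker hy hS fun x hx =>
      hE.lie_map_eq_zero (by lia) (hcol.toEnd_pow_three hy) hS (hcol.lie_eq_self hy hx)
  have hcentral (x : 𝔤) : ⁅x, E (col y)⁆ = 0 := by ext z; simp [hr]
  obtain ⟨T, hTy, hT⟩ := hcol.exists_map_col_add_lie_eq_zero hdim hy hE hcentral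
  let F : 𝔤 →ₗ[K] Module.End K V := E + LieDerivation.inner K 𝔤 _ T
  have hF : IsLieSuccDerivation (m + 2) F :=
    hE.add (isLieSuccDerivation_lieDerivation (LieDerivation.inner K 𝔤 _ T) _)
  have hFh : F (col y) = E (col y) := by simp [F, hTy]
  refine ⟨S + T, fun A => ?_⟩
  rw [lie_add, ← add_assoc]
  exact hcol.exists_map_eq_smul_one hy hF (by rwa [hFh]) hT A

theorem exists_linearMap_map_add_lie_eq_smul_one (hcol : IsRankOneMap f col)
    (hdim : 2 < Module.rank K V) (hf : f ≠ 0) {k : ℕ} (hD : IsLieSuccDerivation (k + 1) D) :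
    ∃ (T : Module.End K V) (c : 𝔤 →ₗ[K] K),
      (∀ A, D A + ⁅A, T⁆ = c A • 1) ∧ (∀ a, c (lieWord a (k + 1)) = 0) ∧
        ∀ x, f x = 0 → c (col x) = 0 := by
  obtain ⟨T, hT⟩ := hcol.exists_map_add_lie_eq_smul_one hdim hf k.succ_ne_zero hD
  obtain ⟨y, hy⟩ := LinearMap.surjective hf (-1)
  let E : 𝔤 →ₗ[K] Module.End K V := D + LieDerivation.inner K 𝔤 _ T
  have hE : IsLieSuccDerivation (k + 1) E :=
    hD.add (isLieSuccDerivation_lieDerivation (LieDerivation.inner K 𝔤 _ T) _)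
  have hEs (A : 𝔤) : E A = -f (E A y) • 1 := by
    obtain ⟨r, hr⟩ : ∃ r : K, E A = r • 1 := hT A
    simp [hr, hy]
  have hcentral (x A : 𝔤) : ⁅x, E A⁆ = 0 := by rw [hEs]; ext z; simp
  have hword (a : ℕ → 𝔤) : E (lieWord a (k + 1)) = 0 := hE.lieWord_succ_eq_zero hcentral a
  refine ⟨T, -(f ∘ₗ LinearMap.applyₗ y ∘ₗ E), hEs, fun a => by simp [hword], fun x hx => ?_⟩
  rw [← lieWord_eq_of_lie_eq_self (hcol.lie_eq_self hy hx) (k + 1)]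
  simp [hword]

end Field

end IsRankOneMap

end RankOne

section CommPoly

theorem commPoly_succ_eq_smul_lieWord {A : Type*} [NonUnitalNonAssocRing A] (a : ℕ → A) (k : ℕ) :
    commPoly (k + 1) (fun i : Fin (k + 1) => a i) = (-1 : ℤ) ^ k • lieWord a k := by
  induction k with
  | zero => exact (one_zsmul _).symm
  | succ k ih =>
    simp only [commPoly, Fin.val_castSucc, Fin.val_last, ih, lieWord, Ring.lie_def, pow_succ,
      mul_neg_one, neg_smul, smul_sub, smul_mul_assoc, mul_smul_comm]
    abel

theorem exists_commPoly_succ_eq_smul_lieWord {A : Type*} [NonUnitalNonAssocRing A] {k : ℕ}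
    (a : Fin (k + 1) → A) : ∃ b : ℕ → A, commPoly (k + 1) a = (-1 : ℤ) ^ k • lieWord b k := by
  refine ⟨fun i => if h : i < k + 1 then a ⟨i, h⟩ else 0, ?_⟩
  simp [← commPoly_succ_eq_smul_lieWord, Fin.is_le]

theorem sum_commPoly_update_eq_smul_lieWordDeriv {A : Type*} [NonUnitalNonAssocRing A]
    (a b : ℕ → A) (k : ℕ) :
    ∑ j : Fin (k + 1), commPoly (k + 1) (Function.update (fun i : Fin (k + 1) => a i) j (b j)) =
      (-1 : ℤ) ^ k • lieWordDeriv a b k := by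
  induction k with
  | zero => simp [commPoly, lieWordDeriv]
  | succ k ih =>
    have hinit (j : Fin (k + 1)) : (fun i : Fin (k + 1) =>
        Function.update (fun i : Fin (k + 2) => a i) j.castSucc (b j) i.castSucc) =
        Function.update (fun i : Fin (k + 1) => a i) j (b j) :=
      Fin.init_update_castSucc (α := fun _ => A) _ _ _
    have hlast : (fun i : Fin (k + 1) =>
        Function.update (fun i : Fin (k + 2) => a i) (Fin.last (k + 1)) (b (k + 1)) i.castSucc) =
        fun i : Fin (k + 1) => a i :=
      Fin.init_update_last (α := fun _ => A) _ _
    rw [Fin.sum_univ_castSucc]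
    simp only [commPoly, Fin.val_castSucc, Fin.val_last, Function.update_self, hinit, hlast,
      Function.update_of_ne (Fin.castSucc_lt_last _).ne', commPoly_succ_eq_smul_lieWord]
    rw [Finset.sum_sub_distrib, ← Finset.sum_mul, ← Finset.mul_sum, ih, lieWordDeriv]
    simp only [Ring.lie_def, pow_succ, mul_neg_one, neg_smul, smul_sub, smul_mul_assoc,
      mul_smul_comm]
    abel

end CommPoly

section Operators

variable {X : Type*} [NormedAddCommGroup X] [NormedSpace ℂ X]
  {𝒜 : NonUnitalSubalgebra ℂ (X →L[ℂ] X)}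

instance : LieAdmissibleRing ↥𝒜 where
  assoc_def := by simp

instance : LieAdmissibleAlgebra ℂ ↥𝒜 where

instance : LieRingModule ↥𝒜 X where
  bracket A x := (A : X →L[ℂ] X) x
  add_lie _ _ _ := rfl
  lie_add A := map_add (A : X →L[ℂ] X)
  leibniz_lie A B x := (sub_add_cancel ((A : X →L[ℂ] X) ((B : X →L[ℂ] X) x)) _).symm

instance : LieModule ℂ ↥𝒜 X where
  smul_lie _ _ _ := rfl
  lie_smul c A := map_smul (A : X →L[ℂ] X) c

instance : LieModule.IsFaithful ℂ ↥𝒜 X where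
  injective_toEnd _ _ hAB := Subtype.ext (ContinuousLinearMap.ext (LinearMap.congr_fun hAB))

theorem coe_lieWord (a : ℕ → ↥𝒜) (k : ℕ) :
    ((lieWord a k : ↥𝒜) : X →L[ℂ] X) = lieWord (fun i => (a i : X →L[ℂ] X)) k := by
  induction k with
  | zero => rfl
  | succ k ih => rw [lieWord, lieWord, ← ih]; rfl

theorem coe_lieWordDeriv (a : ℕ → ↥𝒜) (b : ℕ → X →L[ℂ] X) (k : ℕ) :
    ((lieWordDeriv (fun i => (a i : X →L[ℂ] X)) b k : X →L[ℂ] X) : Module.End ℂ X) =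
      lieWordDeriv a (fun i => (b i : Module.End ℂ X)) k := by
  induction k with
  | zero => rfl
  | succ k ih => rw [lieWordDeriv, lieWordDeriv, ← ih, ← coe_lieWord]; rfl

theorem isLieSuccDerivation_of_isLieNDerivNU {k : ℕ} {L : ↥𝒜 →ₗ[ℂ] (X →L[ℂ] X)}
    (hL : IsLieNDerivNU 𝒜 (k + 1) L) :
    IsLieSuccDerivation k (ContinuousLinearMap.coeLM ℂ ∘ₗ L : ↥𝒜 →ₗ[ℂ] Module.End ℂ X) := by
  intro a
  have hsum := hL fun i => a i
  rw [commPoly_succ_eq_smul_lieWord a k, map_zsmul,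
    sum_commPoly_update_eq_smul_lieWordDeriv (fun i => (a i : X →L[ℂ] X)) (fun i => L (a i))]
    at hsum
  have : IsAddTorsionFree (X →L[ℂ] X) := .of_isTorsionFree ℂ _
  have hword := smul_right_injective _ (pow_ne_zero k (neg_ne_zero.mpr (one_ne_zero (α := ℤ)))) hsum
  simp only [LinearMap.comp_apply, hword]
  exact coe_lieWordDeriv a _ k

variable {f : X →L[ℂ] ℂ} (hf𝒜 : ∀ x, f.smulRight x ∈ 𝒜)

/-- The columns `x ⊗ f` of the rank-one operators with a fixed functional `f`, as a linear map. -/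
def rankOneMap : X →ₗ[ℂ] ↥𝒜 where
  toFun x := ⟨f.smulRight x, hf𝒜 x⟩
  map_add' x y := Subtype.ext (ContinuousLinearMap.ext fun z => smul_add (f z) x y)
  map_smul' c x := Subtype.ext (ContinuousLinearMap.ext fun z => smul_comm (f z) c x)

theorem continuous_rankOneMap : Continuous (rankOneMap hf𝒜) :=
  (ContinuousLinearMap.smulRightL ℂ X X f).continuous.subtype_mk hf𝒜

theorem isRankOneMap_rankOneMap : IsRankOneMap (f : X →ₗ[ℂ] ℂ) (rankOneMap hf𝒜) :=
  fun _ _ => rfl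

theorem continuous_of_map_rankOneMap_add_lie_eq_zero (hf : f ≠ 0) {L : ↥𝒜 →ₗ[ℂ] (X →L[ℂ] X)}
    (hL : Continuous L) {T : Module.End ℂ X}
    (hLT : ∀ x, f x = 0 → (L (rankOneMap hf𝒜 x) : Module.End ℂ X) + ⁅rankOneMap hf𝒜 x, T⁆ = 0) :
    Continuous T := by
  obtain ⟨y, hy⟩ : ∃ y, f y = -1 :=
    LinearMap.surjective (f := (f : X →ₗ[ℂ] ℂ)) (mod_cast hf) (-1)
  have hTker {x : X} (hx : f x = 0) : T x = -(L (rankOneMap hf𝒜 x) y + f (T y) • x) := by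
    have hxy := LinearMap.congr_fun (hLT x hx) y
    simp only [LinearMap.add_apply, LieHom.lie_apply,
      (isRankOneMap_rankOneMap hf𝒜).lie_col_apply, map_smul, ContinuousLinearMap.coe_coe,
      hy, LinearMap.zero_apply] at hxy
    linear_combination (norm := module) hxy
  have hT (x : X) : T x =
      -(L (rankOneMap hf𝒜 (x + f x • y)) y + f (T y) • (x + f x • y)) - f x • T y := by
    rw [← hTker (by simp [hy]), map_add, map_smul, add_sub_cancel_right]
  have hcol := continuous_rankOneMap hf𝒜
  rw [show ⇑T = _ from funext hT]
  fun_prop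

section CommutatorWith

variable {D : ↥𝒜 →ₗ[ℂ] (X →L[ℂ] X)} {T : Module.End ℂ X}

theorem apply_apply_eq_sub_of_coe_add_lie_eq_zero
    (hDT : ∀ A, (D A : Module.End ℂ X) + ⁅A, T⁆ = 0) (A : ↥𝒜) (x : X) :
    D A x = T ((A : X →L[ℂ] X) x) - (A : X →L[ℂ] X) (T x) :=
  (eq_neg_of_add_eq_zero_left (LinearMap.congr_fun (hDT A) x)).trans (neg_sub _ _)

theorem isDerivOnNU_of_coe_add_lie_eq_zero (hDT : ∀ A, (D A : Module.End ℂ X) + ⁅A, T⁆ = 0) :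
    IsDerivOnNU 𝒜 D := by
  intro A B
  ext x
  simp [apply_apply_eq_sub_of_coe_add_lie_eq_zero hDT]

theorem continuous_of_coe_add_lie_eq_zero (hDT : ∀ A, (D A : Module.End ℂ X) + ⁅A, T⁆ = 0)
    (hT : Continuous T) : Continuous D := by
  let S : X →L[ℂ] X := ⟨T, hT⟩
  have hD (A : ↥𝒜) : D A = S * A - A * S :=
    ContinuousLinearMap.ext (apply_apply_eq_sub_of_coe_add_lie_eq_zero hDT A)
  rw [show ⇑D = _ from funext hD]
  fun_prop

end CommutatorWith

end Operators

theorem statement13_general {X : Type*} [NormedAddCommGroup X] [NormedSpace ℂ X]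
    (hdim : 2 < Module.rank ℂ X) (𝒜 : NonUnitalSubalgebra ℂ (X →L[ℂ] X))
    {f : X →L[ℂ] ℂ} (hf : f ≠ 0) (hf𝒜 : ∀ x, f.smulRight x ∈ 𝒜)
    {n : ℕ} (hn : 2 ≤ n) (L : ↥𝒜 →ₗ[ℂ] (X →L[ℂ] X)) (hL : IsLieNDerivNU 𝒜 n L) :
    ∃ D H : ↥𝒜 →ₗ[ℂ] (X →L[ℂ] X),
      IsDerivOnNU 𝒜 D ∧
      (∀ a : ↥𝒜, ∃ c : ℂ, H a = c • (1 : X →L[ℂ] X)) ∧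
      (∀ a : Fin n → ↥𝒜, H (commPoly n a) = 0) ∧
      L = D + H ∧ (Continuous L → Continuous D ∧ Continuous H) := by
  obtain ⟨k, rfl⟩ := Nat.exists_eq_add_of_le' hn
  have hcol := isRankOneMap_rankOneMap hf𝒜
  obtain ⟨T, c, hLT, hc, hccol⟩ := hcol.exists_linearMap_map_add_lie_eq_smul_one hdim (mod_cast hf)
    (isLieSuccDerivation_of_isLieNDerivNU hL)
  let H : ↥𝒜 →ₗ[ℂ] (X →L[ℂ] X) := c.smulRight 1
  have hDT (A : ↥𝒜) : ((L - H) A : Module.End ℂ X) + ⁅A, T⁆ = 0 := by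
    rw [← sub_eq_zero.mpr (hLT A), add_sub_right_comm]
    rfl
  have hHcomm (a : Fin (k + 2) → ↥𝒜) : H (commPoly (k + 2) a) = 0 := by
    obtain ⟨b, hb⟩ := exists_commPoly_succ_eq_smul_lieWord a
    simp [H, hb, hc]
  have hHcol (x : X) (hx : f x = 0) : H (rankOneMap hf𝒜 x) = 0 := by
    simp [H, hccol x hx]
  refine ⟨L - H, H, isDerivOnNU_of_coe_add_lie_eq_zero hDT, fun a => ⟨c a, rfl⟩, hHcomm,
    (sub_add_cancel L H).symm, fun hLcont => ?_⟩
  have hT : Continuous T := continuous_of_map_rankOneMap_add_lie_eq_zero hf𝒜 hf hLcont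
    fun x hx => by simpa [hHcol x hx] using hDT (rankOneMap hf𝒜 x)
  have hD : Continuous (L - H) := continuous_of_coe_add_lie_eq_zero hDT hT
  exact ⟨hD, by rw [← sub_sub_cancel L H]; exact hLcont.sub hD⟩

/-- (Theorem 3.11 of the paper.)  Let `X` be a complex Banach space
with `dim X > 2`, `𝒩` a non-trivial nest on `X`, and `𝒜` a subalgebra of `Alg 𝒩`
satisfying (♠1)–(♠6) with `dim X₋^⊥(𝒜) > 1`.  Then every Lie `n`-derivation
`L : 𝒜 → B(X)` (`n ≥ 2`) decomposes as `L = D + H` with `D` a derivation and `H` a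
linear map into `ℂ I` vanishing on all `(n-1)`-th commutators; moreover, if `L` is
continuous then `D, H` can be chosen continuous. -/
theorem statement13 {X : Type*} [NormedAddCommGroup X] [NormedSpace ℂ X] [CompleteSpace X]
    (hdim : 2 < Module.rank ℂ X)
    (𝒩 : Set (Submodule ℂ X)) (hnest : IsNest 𝒩)
    (hnontrivial : 𝒩 ≠ ({⊥, ⊤} : Set (Submodule ℂ X)))
    (𝒜 : NonUnitalSubalgebra ℂ (X →L[ℂ] X))
    (h𝒜 : ∀ T ∈ 𝒜, T ∈ nestAlgebra 𝒩)
    -- (♠1) : `X₋^⊥(𝒜) ≠ {0}` and `X₋^⊥(𝒜)` is a linear subspace of `X*`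
    (hS1 : XannA 𝒩 𝒜 ≠ ({0} : Set (X →L[ℂ] ℂ)) ∧
      ∃ p : Submodule ℂ (X →L[ℂ] ℂ), (p : Set (X →L[ℂ] ℂ)) = XannA 𝒩 𝒜)
    -- (♠2) : for each `f ∈ X₋^⊥(𝒜)` there exists `y ∈ X \ X₋` with `y ⊗ f ∈ 𝒜`
    (hS2 : ∀ f ∈ XannA 𝒩 𝒜, ∃ y : X, y ∉ nestXminus 𝒩 ∧ f.smulRight y ∈ 𝒜)
    -- (♠3) : `x ⊗ f ∈ 𝒜` for every `x ∈ X(𝒜)` and `f ∈ X₋^⊥(𝒜)`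
    (hS3 : ∀ x ∈ XofA 𝒜, ∀ f ∈ XannA 𝒩 𝒜, f.smulRight x ∈ 𝒜)
    -- (♠4) : `dim(X(𝒜) ∩ ker fᵢ) > 1` and `X(𝒜) ∩ ker f₁ ∩ ker f₂ ≠ {0}`
    (hS4 : ∀ f₁ ∈ XannA 𝒩 𝒜, ∀ f₂ ∈ XannA 𝒩 𝒜,
      (∃ u v : X, u ∈ XofA 𝒜 ∧ f₁ u = 0 ∧ v ∈ XofA 𝒜 ∧ f₁ v = 0 ∧
        LinearIndependent ℂ ![u, v]) ∧
      (∃ u v : X, u ∈ XofA 𝒜 ∧ f₂ u = 0 ∧ v ∈ XofA 𝒜 ∧ f₂ v = 0 ∧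
        LinearIndependent ℂ ![u, v]) ∧
      (∃ z : X, z ≠ 0 ∧ z ∈ XofA 𝒜 ∧ f₁ z = 0 ∧ f₂ z = 0))
    -- (♠5) : `X(𝒜) = X`
    (hS5 : XofA 𝒜 = Set.univ)
    -- (♠6) : `𝒜 X(𝒜) ⊆ X(𝒜)` and `𝒜* X₋^⊥(𝒜) ⊆ X₋^⊥(𝒜)`
    (hS6 : (∀ A : ↥𝒜, ∀ x ∈ XofA 𝒜, (A : X →L[ℂ] X) x ∈ XofA 𝒜) ∧
      (∀ A : ↥𝒜, ∀ f ∈ XannA 𝒩 𝒜, f.comp (A : X →L[ℂ] X) ∈ XannA 𝒩 𝒜))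
    -- `dim X₋^⊥(𝒜) > 1`
    (hdimannA : ∃ f g : X →L[ℂ] ℂ, f ∈ XannA 𝒩 𝒜 ∧ g ∈ XannA 𝒩 𝒜 ∧
      LinearIndependent ℂ ![f, g])
    (n : ℕ) (hn : 2 ≤ n)
    (L : ↥𝒜 →ₗ[ℂ] (X →L[ℂ] X)) (hL : IsLieNDerivNU 𝒜 n L) :
    (∃ D H : ↥𝒜 →ₗ[ℂ] (X →L[ℂ] X),
        IsDerivOnNU 𝒜 D ∧
        (∀ a : ↥𝒜, ∃ c : ℂ, H a = c • (1 : X →L[ℂ] X)) ∧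
        (∀ a : Fin n → ↥𝒜, H (commPoly n a) = 0) ∧
        L = D + H) ∧
    (Continuous L →
      ∃ D H : ↥𝒜 →ₗ[ℂ] (X →L[ℂ] X),
        IsDerivOnNU 𝒜 D ∧
        (∀ a : ↥𝒜, ∃ c : ℂ, H a = c • (1 : X →L[ℂ] X)) ∧
        (∀ a : Fin n → ↥𝒜, H (commPoly n a) = 0) ∧
        L = D + H ∧ Continuous D ∧ Continuous H) := by
  obtain ⟨f, g, hf, -, hfg⟩ := hdimannA
  have hf𝒜 (x : X) : f.smulRight x ∈ 𝒜 := hS3 x (by rw [hS5]; trivial) f hf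
  obtain ⟨D, H, hD, hHscalar, hHcomm, hLDH, hcont⟩ :=
    statement13_general hdim 𝒜 (hfg.ne_zero 0) hf𝒜 hn L hL
  exact ⟨⟨D, H, hD, hHscalar, hHcomm, hLDH⟩,
    fun hLcont => ⟨D, H, hD, hHscalar, hHcomm, hLDH, hcont hLcont⟩⟩
end
end
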